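/- For every s₁ ≥ 0 there exists C > 0 such that for every τ ∈ (0,1] and all sequences (u_n), (v_n), (w_n) of functions in H^{s₁}(𝕋) indexed by ℤ with only finitely many nonzero terms, ‖(Π_τ(Π_τ u_n · Π_τ v_n · Π_τ w_n))_{n∈ℤ}‖_{X^{s₁,-3/8}_τ} ≤ C ‖(u_n)‖_{X^{s₁,3/8}_τ} ‖(v_n)‖_{X^{s₁,3/8}_τ} ‖(w_n)‖_{X^{s₁,3/8}_τ}, where the products inside are pointwise products of functions on 𝕋. -/

import Mathlib

noncomputable section

open MeasureTheory Complex Filter Topology AddCircle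
open scoped ENNReal

abbrev Torus := AddCircle (2 * Real.pi)

instance : Fact (0 < 2 * Real.pi) := ⟨by positivity⟩

/-- Japanese bracket `⟨x⟩ = (1+|x|²)^{1/2}`. -/
def jbr (x : ℝ) : ℝ := Real.sqrt (1 + x ^ 2)

/-- The Sobolev `H^s` norm on the torus, via Fourier coefficients. -/
def hsNorm (s : ℝ) (f : Torus → ℂ) : ℝ :=
  Real.sqrt (∑' k : ℤ, jbr k ^ (2 * s) * ‖fourierCoeff f k‖ ^ 2)

/-- Membership in `H^s(𝕋)` (as a function): square integrable with finite `H^s` norm. -/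
def InHs (s : ℝ) (f : Torus → ℂ) : Prop :=
  MemLp f 2 haarAddCircle ∧ Summable fun k : ℤ => jbr k ^ (2 * s) * ‖fourierCoeff f k‖ ^ 2

/-- The frequency cutoff `Π_τ`, keeping the Fourier modes `|k| ≤ τ^{-1/2}`. -/
def projC (τ : ℝ) (f : Torus → ℂ) : Torus → ℂ := fun x =>
  ∑' k : ℤ, if |(k : ℝ)| ≤ τ ^ (-(1 : ℝ) / 2) then fourierCoeff f k * fourier k x else 0

/-- The free Schrödinger group `e^{it∂_x²}`, given by the Fourier multiplier `e^{-itk²}`. -/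
def schrod (t : ℝ) (f : Torus → ℂ) : Torus → ℂ := fun x =>
  ∑' k : ℤ, Complex.exp (-Complex.I * t * (k : ℂ) ^ 2) * fourierCoeff f k * fourier k x

/-- Continuity on `I` with values in `L²(𝕋)`. -/
def ContL2On (I : Set ℝ) (u : ℝ → Torus → ℂ) : Prop :=
  (∀ t ∈ I, MemLp (u t) 2 haarAddCircle) ∧
  ∀ t ∈ I, Tendsto (fun t' => eLpNorm (u t' - u t) 2 haarAddCircle) (nhdsWithin t I) (nhds 0)

/-- Continuity on `I` with values in `H^s(𝕋)`. -/
def ContHsOn (s : ℝ) (I : Set ℝ) (u : ℝ → Torus → ℂ) : Prop :=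
  (∀ t ∈ I, InHs s (u t)) ∧
  ∀ t ∈ I, Tendsto (fun t' => hsNorm s (u t' - u t)) (nhdsWithin t I) (nhds 0)

/-- The cubic nonlinearity `|f|² f` (pointwise). -/
def cubic (f : Torus → ℂ) : Torus → ℂ := fun x => (‖f x‖ : ℂ) ^ 2 * f x

/-- The filtered cubic nonlinearity `Π_τ(|Π_τ f|² Π_τ f)`. -/
def projCubic (τ : ℝ) (f : Torus → ℂ) : Torus → ℂ := projC τ (cubic (projC τ f))

/-- `v` is the (global-in-time) mild solution of the projected equation
`i∂_t v = -∂_x² v - μ Π_τ(|Π_τ v|² Π_τ v)`, `v(0) = Π_τ u₀`. -/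
def IsProjSolution (μ τ : ℝ) (u₀ : Torus → ℂ) (v : ℝ → Torus → ℂ) : Prop :=
  ContL2On Set.univ v ∧
  ∀ t : ℝ, ∀ x : Torus,
    v t x = schrod t (projC τ u₀) x
      + Complex.I * μ * ∫ s in (0 : ℝ)..t, schrod (t - s) (projCubic τ (v s)) x

/-- The cubic NLS `i∂_t u = -∂_x² u - μ |u|² u` holds in the sense of space-time
distributions on `(0,T) × 𝕋` (tested against `ψ(t) e^{-ikx}`). -/
def DistribSolOn (μ T : ℝ) (u : ℝ → Torus → ℂ) : Prop :=
  ∀ k : ℤ, ∀ ψ : ℝ → ℂ, ContDiff ℝ (⊤ : ℕ∞) ψ → tsupport ψ ⊆ Set.Ioo 0 T →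
    -Complex.I * ∫ t : ℝ, deriv ψ t * fourierCoeff (u t) k
      = (k : ℂ) ^ 2 * ∫ t : ℝ, ψ t * fourierCoeff (u t) k
        - (μ : ℂ) * ∫ t : ℝ, ψ t * fourierCoeff (cubic (u t)) k

/-- `u ∈ L⁴((0,T) × 𝕋)`. -/
def SpaceTimeL4 (T : ℝ) (u : ℝ → Torus → ℂ) : Prop :=
  MemLp (fun p : ℝ × Torus => u p.1 p.2) 4
    ((volume.restrict (Set.Ioo 0 T)).prod haarAddCircle)

/-- Space-time Fourier transform `ṽ(σ,k)` of `v : ℝ × 𝕋 → ℂ`. -/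
def stFT (v : ℝ → Torus → ℂ) (σ : ℝ) (k : ℤ) : ℂ :=
  ∫ t : ℝ, Complex.exp (-Complex.I * σ * t) * fourierCoeff (v t) k

/-- The (continuous) Bourgain `X^{s,b}` norm, valued in `ℝ≥0∞`. -/
def XcNorm (s b : ℝ) (v : ℝ → Torus → ℂ) : ℝ≥0∞ :=
  (∫⁻ σ : ℝ, ∑' k : ℤ,
      ENNReal.ofReal ((1 + |(k : ℝ)|) ^ (2 * s) * (1 + |σ + (k : ℝ) ^ 2|) ^ (2 * b)
        * ‖stFT v σ k‖ ^ 2)) ^ (1 / 2 : ℝ)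

/-- The restriction norm `‖u‖_{X^{s,b}(T)}` is bounded by `M`: some extension of `u`
from `(0,T)` has `X^{s,b}` norm at most `M`. -/
def XresBounded (s b T : ℝ) (u : ℝ → Torus → ℂ) (M : ℝ≥0∞) : Prop :=
  ∃ v : ℝ → Torus → ℂ, (∀ t ∈ Set.Ioo 0 T, v t = u t) ∧ XcNorm s b v ≤ M

/-- `u` is a Bourgain-class solution of cubic NLS on `[0,T]` with datum `u₀`. -/
def IsNLSSolution (μ T : ℝ) (u₀ : Torus → ℂ) (u : ℝ → Torus → ℂ) : Prop :=
  ContL2On (Set.Icc 0 T) u ∧ SpaceTimeL4 T u ∧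
  (∃ b ∈ Set.Ioo (1 / 2 : ℝ) (5 / 8 : ℝ), ∃ v : ℝ → Torus → ℂ,
      (∀ t ∈ Set.Ioo 0 T, v t = u t) ∧ XcNorm 0 b v < ⊤) ∧
  u 0 = u₀ ∧ DistribSolOn μ T u

/-- One step of the pointwise nonlinear flow `e^{iμτ|Π_τ f|²} Π_τ f`. -/
def lieFlow (μ τ : ℝ) (f : Torus → ℂ) : Torus → ℂ := fun x =>
  Complex.exp (Complex.I * μ * τ * (‖projC τ f x‖ : ℂ) ^ 2) * projC τ f x

/-- The filtered Lie splitting scheme `u⁰ = Π_τ u₀`,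
`u^{n+1} = e^{iτ∂_x²} Π_τ (e^{iμτ|Π_τ uⁿ|²} Π_τ uⁿ)`. -/
def lieScheme (μ τ : ℝ) (u₀ : Torus → ℂ) : ℕ → Torus → ℂ
  | 0 => projC τ u₀
  | n + 1 => schrod τ (projC τ (lieFlow μ τ (lieScheme μ τ u₀ n)))

/-- `d_τ(σ) = (e^{iτσ}-1)/τ`. -/
def dtau (τ σ : ℝ) : ℂ := (Complex.exp (Complex.I * τ * σ) - 1) / τ

/-- The discrete Bourgain `X^{s,b}_τ` norm of a sequence of functions on the torus. -/
def XdNorm (τ s b : ℝ) (u : ℤ → Torus → ℂ) : ℝ :=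
  Real.sqrt (∫ σ in Set.Ioc (-(Real.pi / τ)) (Real.pi / τ),
    ∑' k : ℤ, jbr k ^ (2 * s) * jbr ‖dtau τ (σ - (k : ℝ) ^ 2)‖ ^ (2 * b) *
      ‖(τ : ℂ) * ∑' m : ℤ, fourierCoeff (u m) k * Complex.exp (Complex.I * m * τ * σ)‖ ^ 2)

/-- The discrete space-time Lebesgue norm `‖(u_n)‖_{ℓ^p_τ L^q}`. -/
def lpLqNorm (τ p q : ℝ) (u : ℤ → Torus → ℂ) : ℝ :=
  (τ * ∑' n : ℤ, (eLpNorm (u n) (ENNReal.ofReal q) haarAddCircle).toReal ^ p) ^ (1 / p)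

section abstr
variable {α : Type*} [MeasurableSpace α]

def N2 (μ : Measure α) (f : α → ℝ≥0∞) : ℝ≥0∞ := (∫⁻ x, f x ^ 2 ∂μ) ^ (1 / 2 : ℝ)

lemma N2_sq (μ : Measure α) (f : α → ℝ≥0∞) : N2 μ f ^ 2 = ∫⁻ x, f x ^ 2 ∂μ := by
  unfold N2
  rw [← ENNReal.rpow_natCast, ← ENNReal.rpow_mul]
  norm_num

lemma le_of_sq_le {a b : ℝ≥0∞} (h : a ^ 2 ≤ b ^ 2) : a ≤ b := by
  by_contra hc
  push Not at hc
  exact absurd h (not_le.mpr (ENNReal.pow_lt_pow_left (by norm_num) hc))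

lemma cs_lint (μ : Measure α) {f g : α → ℝ≥0∞} (hf : Measurable f) (hg : Measurable g) :
    ∫⁻ x, f x * g x ∂μ ≤ N2 μ f * N2 μ g := by
  have := ENNReal.lintegral_mul_le_Lp_mul_Lq μ (p := 2) (q := 2)
    (by constructor <;> norm_num) hf.aemeasurable hg.aemeasurable
  simpa [N2] using this

lemma N2_mono (μ : Measure α) {f g : α → ℝ≥0∞} (h : ∀ x, f x ≤ g x) : N2 μ f ≤ N2 μ g := by
  apply le_of_sq_le
  rw [N2_sq, N2_sq]
  exact lintegral_mono fun x => pow_le_pow_left' (h x) 2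

lemma N2_const_mul (μ : Measure α) (c : ℝ≥0∞) {f : α → ℝ≥0∞} (hf : Measurable f) :
    N2 μ (fun x => c * f x) = c * N2 μ f := by
  have : N2 μ (fun x => c * f x) ^ 2 = (c * N2 μ f) ^ 2 := by
    rw [mul_pow, N2_sq, N2_sq, ← lintegral_const_mul _ (by fun_prop)]
    simp only [mul_pow]
  exact le_antisymm (le_of_sq_le this.le) (le_of_sq_le this.ge)

lemma N2_tsum_le {ι : Type*} [Countable ι] (μ : Measure α) {f : ι → α → ℝ≥0∞}
    (hf : ∀ i, Measurable (f i)) : N2 μ (fun x => ∑' i, f i x) ≤ ∑' i, N2 μ (f i) := by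
  apply le_of_sq_le
  rw [N2_sq]
  simp only [sq, ← ENNReal.tsum_mul_left, ← ENNReal.tsum_mul_right]
  rw [lintegral_tsum (fun i => by fun_prop)]
  refine ENNReal.tsum_le_tsum fun i => ?_
  rw [lintegral_tsum (fun j => by fun_prop)]
  refine ENNReal.tsum_le_tsum fun j => ?_
  exact cs_lint μ (hf j) (hf i)

lemma cs_tsum {ι : Type*} [Countable ι] (f g : ι → ℝ≥0∞) :
    (∑' i, f i * g i) ^ 2 ≤ (∑' i, f i ^ 2) * ∑' i, g i ^ 2 := by
  let _ : MeasurableSpace ι := ⊤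
  have _ : DiscreteMeasurableSpace ι := ⟨fun _ => trivial⟩
  have := cs_lint (Measure.count : Measure ι) (f := f) (g := g)
    (measurable_of_countable _) (measurable_of_countable _)
  have h2 := pow_le_pow_left' this 2
  rw [mul_pow, N2_sq, N2_sq] at h2
  simpa [lintegral_count] using h2

def dist' (m n : ℕ) : ℕ := (m - n) + (n - m)

lemma rowsum (r : ℝ≥0∞) (m : ℕ) : ∑' n, r ^ (dist' m n) ≤ 2 * (1 - r)⁻¹ := by
  calc ∑' n, r ^ (dist' m n) ≤ ∑' n, ∑' j, r ^ j * ((if n = m + j then 1 else 0) + (if j ∈ Finset.range (m+1) ∧ n = m - j then 1 else 0)) := by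
        refine ENNReal.tsum_le_tsum fun n => ?_
        refine le_trans ?_ (ENNReal.le_tsum (dist' m n))
        unfold dist'
        rcases le_total m n with h | h
        · rw [if_pos (by omega)]
          refine le_mul_of_one_le_right' ?_
          exact le_self_add
        · rw [if_pos (c := _ ∧ _) (by simp; omega)]
          refine le_mul_of_one_le_right' ?_
          exact le_add_self
    _ = ∑' j, r ^ j * ∑' n, ((if n = m + j then 1 else 0) + (if j ∈ Finset.range (m+1) ∧ n = m - j then 1 else 0)) := by
        rw [ENNReal.tsum_comm]
        simp only [ENNReal.tsum_mul_left]
    _ ≤ ∑' j, r ^ j * 2 := by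
        refine ENNReal.tsum_le_tsum fun j => ?_
        gcongr
        rw [ENNReal.tsum_add, ← one_add_one_eq_two]
        gcongr
        · simp
        · calc _ ≤ ∑' n, (if n = m - j then (1:ℝ≥0∞) else 0) := by
                refine ENNReal.tsum_le_tsum fun n => ?_
                split_ifs <;> simp_all
            _ ≤ _ := by simp
    _ = _ := by rw [ENNReal.tsum_mul_right, ENNReal.tsum_geometric, mul_comm]

lemma dist'_comm (m n : ℕ) : dist' m n = dist' n m := by unfold dist'; omega

lemma schur (r : ℝ≥0∞) (a b : ℕ → ℝ≥0∞) :
    (∑' p : ℕ × ℕ, (r ^ 2) ^ (dist' p.1 p.2) * (a p.1 * b p.2)) ^ 2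
      ≤ (2 * (1 - r ^ 2)⁻¹) ^ 2 * ((∑' m, a m ^ 2) * ∑' m, b m ^ 2) := by
  have h := cs_tsum (fun p : ℕ × ℕ => r ^ (dist' p.1 p.2) * a p.1)
    (fun p : ℕ × ℕ => r ^ (dist' p.1 p.2) * b p.2)
  have e : ∀ p : ℕ × ℕ, (r ^ 2) ^ (dist' p.1 p.2) * (a p.1 * b p.2)
      = (r ^ (dist' p.1 p.2) * a p.1) * (r ^ (dist' p.1 p.2) * b p.2) := fun p => by ring
  simp only [e]
  refine h.trans ?_
  have h1 : ∑' p : ℕ × ℕ, (r ^ (dist' p.1 p.2) * a p.1) ^ 2 ≤ (2 * (1 - r ^ 2)⁻¹) * ∑' m, a m ^ 2 := by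
    rw [ENNReal.tsum_prod', ← ENNReal.tsum_mul_left]
    refine ENNReal.tsum_le_tsum fun m => ?_
    simp only [mul_pow, ENNReal.tsum_mul_right]
    gcongr
    simp only [← pow_mul]
    simp only [mul_comm _ 2, pow_mul]
    exact rowsum (r^2) m
  have h2 : ∑' p : ℕ × ℕ, (r ^ (dist' p.1 p.2) * b p.2) ^ 2 ≤ (2 * (1 - r ^ 2)⁻¹) * ∑' m, b m ^ 2 := by
    rw [ENNReal.tsum_prod', ENNReal.tsum_comm, ← ENNReal.tsum_mul_left]
    refine ENNReal.tsum_le_tsum fun m => ?_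
    simp only [mul_pow, ENNReal.tsum_mul_right]
    gcongr
    simp only [← pow_mul]
    simp only [mul_comm _ 2, pow_mul, dist'_comm _ m]
    exact rowsum (r^2) m
  calc _ ≤ _ := mul_le_mul' h1 h2
    _ = _ := by ring

end abstr

section conv
variable {G : Type*} [AddCommGroup G] [MeasurableSpace G] [MeasurableAdd₂ G] [MeasurableNeg G]

def cv (μ : Measure G) (f g : G → ℝ≥0∞) : G → ℝ≥0∞ := fun x => ∫⁻ y, f y * g (x - y) ∂μ

variable (μ : Measure G) [SFinite μ]

lemma meas_sub' : Measurable fun p : G × G => p.1 - p.2 := by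
  simp only [sub_eq_add_neg]; fun_prop

lemma cv_meas {f g : G → ℝ≥0∞} (hf : Measurable f) (hg : Measurable g) :
    Measurable (cv μ f g) := by
  unfold cv
  apply Measurable.lintegral_prod_right (f := fun x y => f y * g (x - y))
  exact (hf.comp measurable_snd).mul (hg.comp meas_sub')

def RefInv : Prop := ∀ (a : G) (f : G → ℝ≥0∞), Measurable f → ∫⁻ x, f (a - x) ∂μ = ∫⁻ x, f x ∂μ

lemma RefInv.trans {μ : Measure G} (h : RefInv μ) (a : G) (f : G → ℝ≥0∞) (hf : Measurable f) :
    ∫⁻ x, f (x - a) ∂μ = ∫⁻ x, f x ∂μ := by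
  have h1 := h a (fun y => f (0 - y)) (by simp only [zero_sub]; fun_prop)
  have h2 := h 0 f hf
  rw [h2] at h1
  rw [← h1]
  simp

/-- single block estimate -/
lemma block (hμ : RefInv μ) {A B : Set G} (hA : MeasurableSet A) (hB : MeasurableSet B) (K : ℝ≥0∞)
    (hK : ∀ x, μ {y | y ∈ A ∧ x - y ∈ B} ≤ K) {f g : G → ℝ≥0∞} (hf : Measurable f)
    (hg : Measurable g) (hfA : ∀ x, x ∉ A → f x = 0) (hgB : ∀ x, x ∉ B → g x = 0) :
    N2 μ (cv μ f g) ^ 2 ≤ K * (N2 μ f ^ 2 * N2 μ g ^ 2) := by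
  rw [N2_sq]
  have hm : ∀ x : G, Measurable fun y => x - y := fun x => by
    simp only [sub_eq_add_neg]; fun_prop
  have h1 : ∀ x, cv μ f g x ^ 2 ≤ K * ∫⁻ y, f y ^ 2 * g (x - y) ^ 2 ∂μ := by
    intro x
    have hS : MeasurableSet {y | y ∈ A ∧ x - y ∈ B} := hA.inter (hm x hB)
    have e : cv μ f g x = ∫⁻ y, (Set.indicator {y | y ∈ A ∧ x - y ∈ B} 1 y) * (f y * g (x - y)) ∂μ := by
      unfold cv
      congr 1; ext y
      by_cases hy : y ∈ {y | y ∈ A ∧ x - y ∈ B}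
      · simp [Set.indicator_of_mem hy]
      · rw [Set.indicator_of_notMem hy, zero_mul]
        by_cases h : y ∈ A
        · rw [hgB _ (fun h' => hy ⟨h, h'⟩), mul_zero]
        · rw [hfA _ h, zero_mul]
    rw [e]
    have := pow_le_pow_left' (cs_lint μ (f := Set.indicator {y | y ∈ A ∧ x - y ∈ B} 1)
      (g := fun y => f y * g (x - y)) (measurable_one.indicator hS)
      (hf.mul (hg.comp (hm x)))) 2
    refine this.trans ?_
    rw [mul_pow, N2_sq, N2_sq]
    simp only [mul_pow]
    gcongr
    refine le_trans (le_of_eq ?_) (hK x)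
    rw [← lintegral_indicator_one hS]
    congr 1; ext y
    by_cases hy : y ∈ {y | y ∈ A ∧ x - y ∈ B}
    · simp [Set.indicator_of_mem hy]
    · simp [Set.indicator_of_notMem hy]
  have hmm : Measurable (Function.uncurry fun x y : G => f y ^ 2 * g (x - y) ^ 2) :=
    ((hf.comp measurable_snd).pow_const 2).mul ((hg.comp meas_sub').pow_const 2)
  calc ∫⁻ x, cv μ f g x ^ 2 ∂μ ≤ ∫⁻ x, K * ∫⁻ y, f y ^ 2 * g (x - y) ^ 2 ∂μ ∂μ := lintegral_mono h1
    _ = K * ∫⁻ x, ∫⁻ y, f y ^ 2 * g (x - y) ^ 2 ∂μ ∂μ := by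
        rw [lintegral_const_mul]
        exact hmm.lintegral_prod_right
    _ = K * ∫⁻ y, ∫⁻ x, f y ^ 2 * g (x - y) ^ 2 ∂μ ∂μ := by
        rw [lintegral_lintegral_swap hmm.aemeasurable]
    _ = K * ∫⁻ y, f y ^ 2 * ∫⁻ x, g x ^ 2 ∂μ ∂μ := by
        congr 2; ext y
        rw [lintegral_const_mul]
        · rw [hμ.trans y (fun x => g x ^ 2) (by fun_prop)]
        · simp only [sub_eq_add_neg]; fun_prop
    _ = _ := by
        rw [lintegral_mul_const _ (by fun_prop), N2_sq, N2_sq]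

/-- the bilinear estimate -/
lemma bilin (hμ : RefInv μ) (S : Set G) (hS : MeasurableSet S) (lev : G → ℕ) (hlev : Measurable lev)
    (w : G → ℝ≥0∞) (hw : Measurable w) (q K : ℝ≥0∞) (hq1 : 1 ≤ q) (hqt : q ≠ ⊤)
    (hwl : ∀ x, q ^ (3 * lev x) ≤ w x)
    (hK : ∀ m n x, μ {y | (y ∈ S ∧ lev y = m) ∧ (x - y ∈ S ∧ lev (x - y) = n)}
      ≤ K ^ 2 * q ^ (8 * min m n + 4 * max m n))
    {f g : G → ℝ≥0∞} (hf : Measurable f) (hg : Measurable g)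
    (hfS : ∀ x, x ∉ S → f x = 0) (hgS : ∀ x, x ∉ S → g x = 0) :
    N2 μ (cv μ f g) ≤ K * (2 * (1 - q⁻¹)⁻¹) *
      (N2 μ (fun x => w x * f x) * N2 μ (fun x => w x * g x)) := by
  have hq0 : q ≠ 0 := by intro h; simp [h] at hq1
  let fm : (G → ℝ≥0∞) → ℕ → G → ℝ≥0∞ := fun f m => Set.indicator (lev ⁻¹' {m}) f
  have hfm : ∀ f, Measurable f → ∀ m, Measurable (fm f m) := fun f hf m =>
    hf.indicator (hlev (measurableSet_singleton m))
  have hsum : ∀ (f : G → ℝ≥0∞) x, f x = ∑' m, fm f m x := by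
    intro f x
    rw [tsum_eq_single (lev x)]
    · simp [fm]
    · intro m hm
      simp only [fm]
      rw [Set.indicator_of_notMem]
      simpa using hm.symm
  have hA : ∀ f, Measurable f → (∀ x, x ∉ S → f x = 0) → ∀ m,
      q ^ (3 * m) * N2 μ (fm f m) ≤ N2 μ (fun x => w x * fm f m x) := by
    intro f hf hfS m
    rw [← N2_const_mul _ _ (hfm f hf m)]
    apply N2_mono
    intro x
    by_cases hx : lev x = m
    · gcongr
      rw [← hx]; exact hwl x
    · have : fm f m x = 0 := by
        simp only [fm]; rw [Set.indicator_of_notMem]; simpa using hx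
      simp [this]
  have hB : ∀ f, Measurable f → ∑' m, N2 μ (fun x => w x * fm f m x) ^ 2 = N2 μ (fun x => w x * f x) ^ 2 := by
    intro f hf
    simp only [N2_sq]
    rw [← lintegral_tsum]
    · congr 1; ext x
      rw [tsum_eq_single (lev x)]
      · simp [fm]
      · intro m hm
        simp only [fm]
        rw [Set.indicator_of_notMem]
        · simp
        · simpa using hm.symm
    · intro m
      have := hfm f hf m
      fun_prop
  have hblock : ∀ p : ℕ × ℕ, N2 μ (cv μ (fm f p.1) (fm g p.2)) ≤
      K * ((q⁻¹) ^ dist' p.1 p.2 * (N2 μ (fun x => w x * fm f p.1 x) * N2 μ (fun x => w x * fm g p.2 x))) := by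
    rintro ⟨m, n⟩
    have hb := block μ hμ (A := {y | y ∈ S ∧ lev y = m}) (B := {y | y ∈ S ∧ lev y = n})
      (hS.inter (hlev (measurableSet_singleton m))) (hS.inter (hlev (measurableSet_singleton n)))
      _ (hK m n) (f := fm f m) (g := fm g n) (hfm f hf m) (hfm g hg n)
      (by
        intro x hx
        by_cases h : lev x = m
        · have : fm f m x = f x := by simp [fm, h]
          rw [this]; exact hfS x (fun h' => hx ⟨h', h⟩)
        · simp only [fm]; rw [Set.indicator_of_notMem]; simpa using h)
      (by
        intro x hx
        by_cases h : lev x = n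
        · have : fm g n x = g x := by simp [fm, h]
          rw [this]; exact hgS x (fun h' => hx ⟨h', h⟩)
        · simp only [fm]; rw [Set.indicator_of_notMem]; simpa using h)
    have h1 := mul_le_mul' (hA f hf hfS m) (hA g hg hgS n)
    have key : q ^ (4 * min m n + 2 * max m n) = (q⁻¹) ^ dist' m n * (q ^ (3 * m) * q ^ (3 * n)) := by
      have : q ^ (3 * m) * q ^ (3 * n) = q ^ dist' m n * q ^ (4 * min m n + 2 * max m n) := by
        rw [← pow_add, ← pow_add]; congr 1
        unfold dist'
        rcases le_total m n with h | h <;> simp only [min_eq_left, max_eq_right, min_eq_right, max_eq_left, h] <;> omega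
      rw [this, ← mul_assoc, ← mul_pow, ENNReal.inv_mul_cancel hq0 hqt, one_pow, one_mul]
    have h2 : N2 μ (cv μ (fm f m) (fm g n)) ≤ K * q ^ (4 * min m n + 2 * max m n) * (N2 μ (fm f m) * N2 μ (fm g n)) := by
      apply le_of_sq_le
      refine hb.trans (le_of_eq ?_)
      ring
    refine h2.trans ?_
    rw [key]
    calc _ = K * ((q⁻¹) ^ dist' m n * (q ^ (3 * m) * N2 μ (fm f m) * (q ^ (3 * n) * N2 μ (fm g n)))) := by ring
      _ ≤ _ := by gcongr
  have hcv : cv μ f g = fun x => ∑' p : ℕ × ℕ, cv μ (fm f p.1) (fm g p.2) x := by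
    ext x
    unfold cv
    rw [← lintegral_tsum]
    · congr 1; ext y
      rw [ENNReal.tsum_prod']
      simp only [ENNReal.tsum_mul_left, ENNReal.tsum_mul_right]
      rw [← hsum, ← hsum]
    · intro p
      have h1 := hfm f hf p.1
      have h2 := hfm g hg p.2
      have : Measurable fun y => x - y := by simp only [sub_eq_add_neg]; fun_prop
      exact (h1.mul (h2.comp this)).aemeasurable
  rw [hcv]
  refine (N2_tsum_le μ fun p : ℕ × ℕ => cv_meas μ (hfm f hf p.1) (hfm g hg p.2)).trans ?_
  refine (ENNReal.tsum_le_tsum hblock).trans ?_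
  rw [ENNReal.tsum_mul_left, mul_assoc]
  gcongr
  have hs := schur (q⁻¹ ^ (1 / 2 : ℝ)) (fun m => N2 μ (fun x => w x * fm f m x)) (fun m => N2 μ (fun x => w x * fm g m x))
  have hsq : (q⁻¹ ^ (1 / 2 : ℝ)) ^ 2 = q⁻¹ := by
    rw [← ENNReal.rpow_natCast, ← ENNReal.rpow_mul]; norm_num
  rw [hsq, hB f hf, hB g hg, ← mul_pow, ← mul_pow] at hs
  exact le_of_sq_le hs

lemma corr_norm (hμ : RefInv μ) {z h : G → ℝ≥0∞} (hz : Measurable z) (hh : Measurable h) :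
    N2 μ (fun y => ∫⁻ x, z x * h (x - y) ∂μ) = N2 μ (cv μ z h) := by
  have hsq : N2 μ (fun y => ∫⁻ x, z x * h (x - y) ∂μ) ^ 2 = N2 μ (cv μ z h) ^ 2 := by
    rw [N2_sq, N2_sq]
    unfold cv
    have hm1 : ∀ y, Measurable fun x => z x * h (x - y) := fun y => by
      simp only [sub_eq_add_neg]; fun_prop
    have hm2 : ∀ y, Measurable fun x => z x * h (y - x) := fun y => by
      simp only [sub_eq_add_neg]; fun_prop
    have e1 : ∀ y, (∫⁻ x, z x * h (x - y) ∂μ) ^ 2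
        = ∫⁻ p : G × G, (z p.1 * h (p.1 - y)) * (z p.2 * h (p.2 - y)) ∂(μ.prod μ) := fun y => by
      rw [sq, lintegral_prod_mul (hm1 y).aemeasurable (hm1 y).aemeasurable]
    have e2 : ∀ y, (∫⁻ x, z x * h (y - x) ∂μ) ^ 2
        = ∫⁻ p : G × G, (z p.1 * h (y - p.1)) * (z p.2 * h (y - p.2)) ∂(μ.prod μ) := fun y => by
      rw [sq, lintegral_prod_mul (hm2 y).aemeasurable (hm2 y).aemeasurable]
    simp only [e1, e2]
    conv_lhs => rw [lintegral_lintegral_swap (by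
      apply Measurable.aemeasurable
      simp only [sub_eq_add_neg, Function.uncurry_def]; fun_prop)]
    rw [eq_comm, lintegral_lintegral_swap, eq_comm]
    · congr 1; ext p
      rw [← hμ (p.1 + p.2)]
      · congr 1; ext y
        have h1 : p.1 - (p.1 + p.2 - y) = y - p.2 := by abel
        have h2 : p.2 - (p.1 + p.2 - y) = y - p.1 := by abel
        rw [h1, h2]; ring
      · simp only [sub_eq_add_neg]; fun_prop
    · apply Measurable.aemeasurable
      simp only [sub_eq_add_neg, Function.uncurry_def]; fun_prop
  exact le_antisymm (le_of_sq_le hsq.le) (le_of_sq_le hsq.ge)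

lemma quad (hμ : RefInv μ) {z f g h : G → ℝ≥0∞} (hz : Measurable z) (hf : Measurable f)
    (hg : Measurable g) (hh : Measurable h) :
    ∫⁻ x, z x * cv μ (cv μ f g) h x ∂μ ≤ N2 μ (cv μ f g) * N2 μ (cv μ z h) := by
  have hc := cv_meas μ hf hg
  have e : ∫⁻ x, z x * cv μ (cv μ f g) h x ∂μ
      = ∫⁻ y, cv μ f g y * ∫⁻ x, z x * h (x - y) ∂μ ∂μ := by
    conv_lhs => unfold cv
    have : ∀ x, z x * ∫⁻ y, (cv μ f g y) * h (x - y) ∂μ = ∫⁻ y, z x * (cv μ f g y * h (x - y)) ∂μ := by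
      intro x
      rw [lintegral_const_mul]
      simp only [sub_eq_add_neg]; fun_prop
    change ∫⁻ x, z x * ∫⁻ y, (cv μ f g y) * h (x - y) ∂μ ∂μ = _
    simp only [this]
    rw [lintegral_lintegral_swap]
    · congr 1; ext y
      rw [← lintegral_const_mul]
      · congr 1; ext x; ring
      · simp only [sub_eq_add_neg]; fun_prop
    · apply Measurable.aemeasurable
      simp only [sub_eq_add_neg, Function.uncurry_def]; fun_prop
  rw [e, ← corr_norm μ hμ hz hh]
  apply cs_lint μ hc
  apply Measurable.lintegral_prod_right (f := fun y x => z x * h (x - y))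
  simp only [sub_eq_add_neg, Function.uncurry_def]; fun_prop

end conv

section conc
abbrev Cir (τ : ℝ) := AddCircle (2 * Real.pi / τ)

def mG (τ : ℝ) [Fact (0 < 2 * Real.pi / τ)] : Measure (ℤ × Cir τ) := Measure.count.prod volume

instance (τ : ℝ) [Fact (0 < 2 * Real.pi / τ)] : SFinite (mG τ) := by unfold mG; infer_instance

lemma lint_mG (τ : ℝ) [Fact (0 < 2 * Real.pi / τ)] (f : ℤ × Cir τ → ℝ≥0∞) (hf : Measurable f) :
    ∫⁻ x, f x ∂(mG τ) = ∑' k : ℤ, ∫⁻ θ : Cir τ, f (k, θ) := by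
  unfold mG
  rw [lintegral_prod _ hf.aemeasurable, lintegral_count]

lemma refInv_mG (τ : ℝ) [Fact (0 < 2 * Real.pi / τ)] : RefInv (mG τ) := by
  rintro ⟨k, θ⟩ f hf
  rw [lint_mG _ _ hf, lint_mG]
  · simp only [Prod.mk_sub_mk]
    have h : ∀ l : ℤ, ∫⁻ t : Cir τ, f (k - l, θ - t) = ∫⁻ t : Cir τ, f (k - l, t) := fun l =>
      lintegral_sub_left_eq_self (fun t => f (k - l, t)) θ
    simp only [h]
    exact (Equiv.subLeft k).tsum_eq (fun l => ∫⁻ t : Cir τ, f (l, t))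
  · simp only [sub_eq_add_neg]; fun_prop

def nn (τ : ℝ) (θ : Cir τ) : ℝ := ‖(fourier 1 θ : ℂ) - 1‖ / τ

lemma nn_cont (τ : ℝ) : Continuous (nn τ) := by unfold nn; fun_prop

lemma four_coe {τ : ℝ} (hτ : 0 < τ) (n : ℤ) (σ : ℝ) :
    (fourier n (σ : Cir τ) : ℂ) = Complex.exp (Complex.I * n * τ * σ) := by
  rw [fourier_coe_apply]
  congr 1
  have : (τ : ℂ) ≠ 0 := by exact_mod_cast hτ.ne'
  have : (Real.pi : ℂ) ≠ 0 := by exact_mod_cast Real.pi_ne_zero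
  push_cast
  field_simp

lemma nn_coe {τ : ℝ} (hτ : 0 < τ) (σ : ℝ) : nn τ (σ : Cir τ) = ‖dtau τ σ‖ := by
  unfold nn dtau
  rw [four_coe hτ, norm_div]
  simp [abs_of_pos hτ]

lemma nn_nonneg {τ : ℝ} (hτ : 0 < τ) (θ : Cir τ) : 0 ≤ nn τ θ := by unfold nn; positivity

lemma nn_add {τ : ℝ} (hτ : 0 < τ) (a b : Cir τ) : nn τ (a + b) ≤ nn τ a + nn τ b := by
  unfold nn
  rw [← add_div]
  gcongr
  have : (fourier 1 (a + b) : ℂ) - 1 = fourier 1 a * (fourier 1 b - 1) + (fourier 1 a - 1) := by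
    simp only [fourier_one, AddCircle.toCircle_add, Circle.coe_mul]; ring
  rw [this]
  refine (norm_add_le _ _).trans ?_
  rw [norm_mul]
  simp only [fourier_one, Circle.norm_coe, one_mul]
  linarith

lemma nn_neg (τ : ℝ) (a : Cir τ) : nn τ (-a) = nn τ a := by
  unfold nn
  congr 1
  have h1 : (fourier 1 (-a) : ℂ) = (starRingEnd ℂ) (fourier 1 a) := by
    simp only [fourier_one, AddCircle.toCircle_neg, Circle.coe_inv_eq_conj]
  rw [h1, ← Complex.norm_conj ((fourier 1 a : ℂ) - 1)]
  simp

lemma nn_lower {τ : ℝ} (hτ : 0 < τ) (x : ℝ) (hx : |x| ≤ Real.pi / τ) :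
    2 / Real.pi * |x| ≤ nn τ (x : Cir τ) := by
  unfold nn
  rw [four_coe hτ, le_div_iff₀ hτ]
  have h1 : Complex.I * ((1 : ℤ) : ℂ) * τ * x = Complex.I * ((τ * x : ℝ) : ℂ) := by push_cast; ring
  rw [h1, Complex.norm_exp_I_mul_ofReal_sub_one, norm_mul]
  have h2 : |τ * x / 2| ≤ Real.pi / 2 := by
    rw [abs_div, abs_mul, abs_of_pos hτ, abs_two]
    rw [le_div_iff₀ hτ] at hx
    linarith
  have := Real.mul_abs_le_abs_sin h2
  rw [abs_div, abs_mul, abs_of_pos hτ, abs_two] at this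
  simp only [Real.norm_eq_abs, abs_two]
  calc _ = 2 * (2 / Real.pi * (τ * |x| / 2)) := by ring
    _ ≤ _ := by gcongr

lemma vol_nn {τ : ℝ} (hτ : 0 < τ) [Fact (0 < 2 * Real.pi / τ)] (M : ℝ) :
    volume {θ : Cir τ | nn τ θ ≤ M} ≤ ENNReal.ofReal (Real.pi * M) := by
  have hms : MeasurableSet {θ : Cir τ | nn τ θ ≤ M} :=
    measurableSet_le (nn_cont τ).measurable measurable_const
  rw [← lintegral_indicator_one hms, ← AddCircle.lintegral_preimage _ (-(Real.pi / τ))]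
  have hsub : ∀ a ∈ Set.Ioc (-(Real.pi / τ)) (-(Real.pi / τ) + 2 * Real.pi / τ),
      ({θ : Cir τ | nn τ θ ≤ M}.indicator (1 : Cir τ → ℝ≥0∞)) (a : Cir τ)
        ≤ (Set.Icc (-(Real.pi / 2 * M)) (Real.pi / 2 * M)).indicator (1 : ℝ → ℝ≥0∞) a := by
    intro a ha
    by_cases h : (a : Cir τ) ∈ {θ : Cir τ | nn τ θ ≤ M}
    · rw [Set.indicator_of_mem h, Set.indicator_of_mem]
      · simp
      have hpi := Real.pi_pos
      have h2 : 2 * Real.pi / τ = Real.pi / τ + Real.pi / τ := by ring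
      have := nn_lower hτ a (abs_le.mpr ⟨by linarith [ha.1], by linarith [ha.2]⟩)
      have h3 : 2 / Real.pi * |a| ≤ M := this.trans h
      rw [div_mul_eq_mul_div, div_le_iff₀ hpi] at h3
      rw [Set.mem_Icc, ← abs_le]
      linarith
    · rw [Set.indicator_of_notMem h]; exact zero_le
  calc _ ≤ ∫⁻ a in Set.Ioc (-(Real.pi / τ)) (-(Real.pi / τ) + 2 * Real.pi / τ),
        (Set.Icc (-(Real.pi / 2 * M)) (Real.pi / 2 * M)).indicator (1 : ℝ → ℝ≥0∞) a :=
        setLIntegral_mono' measurableSet_Ioc hsub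
    _ ≤ ∫⁻ a, (Set.Icc (-(Real.pi / 2 * M)) (Real.pi / 2 * M)).indicator (1 : ℝ → ℝ≥0∞) a :=
        setLIntegral_le_lintegral _ _
    _ = _ := by
        rw [lintegral_indicator_one measurableSet_Icc, Real.volume_Icc]
        congr 1; ring

lemma card_diam (U : Finset ℤ) (r : ℝ) (hr : 0 ≤ r) (h : ∀ a ∈ U, ∀ b ∈ U, |((a : ℝ) - b)| ≤ r) :
    (U.card : ℝ) ≤ r + 1 := by
  rcases U.eq_empty_or_nonempty with rfl | hU
  · simp; linarith
  have hsub : U ⊆ Finset.Icc (U.min' hU) (U.min' hU + ⌊r⌋) := by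
    intro a ha
    rw [Finset.mem_Icc]
    refine ⟨U.min'_le a ha, ?_⟩
    have := h a ha _ (U.min'_mem hU)
    have h2 : ((a - U.min' hU : ℤ) : ℝ) ≤ r := by push_cast; exact (le_abs_self _).trans this
    have := Int.le_floor.mpr h2
    linarith
  have hc := Finset.card_le_card hsub
  rw [Int.card_Icc] at hc
  have h0 : 0 ≤ ⌊r⌋ := Int.floor_nonneg.mpr hr
  have : (U.card : ℤ) ≤ ⌊r⌋ + 1 := by omega
  have h3 : (U.card : ℝ) ≤ (⌊r⌋ : ℝ) + 1 := by exact_mod_cast this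
  linarith [Int.floor_le r]

lemma card_sq (T : Finset ℤ) (k : ℤ) (R : ℝ)
    (h : ∀ a ∈ T, ∀ b ∈ T, |(2 * (a : ℝ) - k) ^ 2 - (2 * (b : ℝ) - k) ^ 2| ≤ R) :
    (T.card : ℝ) ≤ Real.sqrt R + 2 := by
  have hs := Real.sqrt_nonneg R
  have key : ∀ a ∈ T, ∀ b ∈ T, 0 ≤ (2 * (a : ℝ) - k) * (2 * (b : ℝ) - k) →
      |((a : ℝ) - b)| ≤ Real.sqrt R / 2 := by
    intro a ha b hb hab
    have h1 := h a ha b hb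
    have h2 : (2 * |((a : ℝ) - b)|) ^ 2 ≤ R := by
      refine le_trans ?_ h1
      rw [mul_pow, sq_abs]
      rcases abs_cases ((2 * (a : ℝ) - k) ^ 2 - (2 * (b : ℝ) - k) ^ 2) with ⟨e, _⟩ | ⟨e, _⟩ <;> rw [e]
      · by_cases hc : (2 * (a : ℝ) - k) ^ 2 - (2 * (b : ℝ) - k) ^ 2 ≥ 0
        · set x := 2 * (a : ℝ) - k
          set y := 2 * (b : ℝ) - k
          have : (a : ℝ) - b = (x - y) / 2 := by simp [x, y]; ring
          rw [this]
          have hxy : y ^ 2 ≤ x * y := by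
            rcases le_total 0 y with hy | hy
            · rcases hy.eq_or_lt with h0 | h0
              · simp [← h0]
              · have : 0 ≤ x := nonneg_of_mul_nonneg_left hab h0
                nlinarith
            · rcases hy.eq_or_lt with h0 | h0
              · simp [h0]
              · have : x ≤ 0 := by by_contra hx; push Not at hx; nlinarith
                nlinarith
          nlinarith
        · linarith
      · set x := 2 * (a : ℝ) - k
        set y := 2 * (b : ℝ) - k
        have : (a : ℝ) - b = (x - y) / 2 := by simp [x, y]; ring
        rw [this]
        have hxy : x ^ 2 ≤ x * y := by
          rcases le_total 0 x with hy | hy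
          · rcases hy.eq_or_lt with h0 | h0
            · simp [← h0]
            · have : 0 ≤ y := nonneg_of_mul_nonneg_right hab h0
              nlinarith
          · rcases hy.eq_or_lt with h0 | h0
            · simp [h0]
            · have : y ≤ 0 := by by_contra hx; push Not at hx; nlinarith
              nlinarith
        nlinarith
    have := Real.le_sqrt_of_sq_le h2
    linarith
  have hp := card_diam (T.filter fun a => 0 ≤ 2 * (a : ℝ) - k) (Real.sqrt R / 2) (by positivity)
    (by
      intro a ha b hb
      rw [Finset.mem_filter] at ha hb
      exact key a ha.1 b hb.1 (mul_nonneg ha.2 hb.2))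
  have hn := card_diam (T.filter fun a => ¬ 0 ≤ 2 * (a : ℝ) - k) (Real.sqrt R / 2) (by positivity)
    (by
      intro a ha b hb
      rw [Finset.mem_filter] at ha hb
      exact key a ha.1 b hb.1 (mul_nonneg_of_nonpos_of_nonpos (not_le.mp ha.2).le (not_le.mp hb.2).le))
  have := Finset.card_filter_add_card_filter_not (s := T) (fun a : ℤ => 0 ≤ 2 * (a : ℝ) - k)
  have h3 : (T.card : ℝ) = (T.filter fun a : ℤ => 0 ≤ 2 * (a : ℝ) - k).card + (T.filter fun a : ℤ => ¬ 0 ≤ 2 * (a : ℝ) - k).card := by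
    exact_mod_cast this.symm
  linarith

def Lg (τ : ℝ) (x : ℤ × Cir τ) : ℝ := jbr (nn τ (x.2 - (((x.1 : ℝ) ^ 2 : ℝ) : Cir τ)))

lemma jbr_one_le (x : ℝ) : 1 ≤ jbr x := by
  unfold jbr
  rw [Real.one_le_sqrt]; nlinarith [sq_nonneg x]

lemma jbr_ge (x : ℝ) : x ≤ jbr x := by
  unfold jbr
  apply Real.le_sqrt_of_sq_le; linarith

lemma jbr_cont : Continuous jbr := by unfold jbr; fun_prop

lemma Lg_meas (τ : ℝ) [Fact (0 < 2 * Real.pi / τ)] : Measurable (Lg τ) := by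
  unfold Lg
  apply jbr_cont.measurable.comp
  apply (nn_cont τ).measurable.comp
  apply Measurable.sub
  · exact measurable_snd
  · exact (measurable_of_countable (fun k : ℤ => (((k : ℝ) ^ 2 : ℝ) : Cir τ))).comp measurable_fst

def lev (τ : ℝ) (x : ℤ × Cir τ) : ℕ := Nat.log 2 ⌊Lg τ x⌋₊

lemma lev_meas (τ : ℝ) [Fact (0 < 2 * Real.pi / τ)] : Measurable (lev τ) := by
  unfold lev
  exact (measurable_of_countable (Nat.log 2)).comp (Nat.measurable_floor.comp (Lg_meas τ))

lemma lev_le (τ : ℝ) (x : ℤ × Cir τ) : (2 : ℝ) ^ lev τ x ≤ Lg τ x := by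
  have h1 : 1 ≤ Lg τ x := jbr_one_le _
  have h : 2 ^ lev τ x ≤ ⌊Lg τ x⌋₊ := Nat.pow_log_le_self 2 (by
    have := Nat.one_le_floor_iff (Lg τ x) |>.mpr h1
    omega)
  calc (2 : ℝ) ^ lev τ x ≤ (⌊Lg τ x⌋₊ : ℝ) := by exact_mod_cast h
    _ ≤ _ := Nat.floor_le (by linarith)

lemma lt_lev (τ : ℝ) (x : ℤ × Cir τ) : Lg τ x < 2 * (2 : ℝ) ^ lev τ x := by
  have h1 : 1 ≤ Lg τ x := jbr_one_le _
  have h : ⌊Lg τ x⌋₊ < 2 ^ (lev τ x).succ := Nat.lt_pow_succ_log_self (by norm_num) _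
  rw [Nat.floor_lt (by linarith)] at h
  rw [Nat.succ_eq_add_one, pow_succ] at h
  push_cast at h
  linarith

def SS (τ : ℝ) : Set (ℤ × Cir τ) := {x | |(x.1 : ℝ)| ≤ τ ^ (-(1 : ℝ) / 2)}

lemma SS_meas (τ : ℝ) [Fact (0 < 2 * Real.pi / τ)] : MeasurableSet (SS τ) := by
  unfold SS
  exact measurable_fst (MeasurableSet.of_discrete (s := {k : ℤ | |(k : ℝ)| ≤ τ ^ (-(1 : ℝ) / 2)}))

lemma cut_sq {τ : ℝ} (hτ : 0 < τ) (k : ℤ) (hk : |(k : ℝ)| ≤ τ ^ (-(1 : ℝ) / 2)) : (k : ℝ) ^ 2 ≤ 1 / τ := by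
  rw [← sq_abs]
  calc |(k : ℝ)| ^ 2 ≤ (τ ^ (-(1 : ℝ) / 2)) ^ 2 := by gcongr
    _ = 1 / τ := by
      rw [← Real.rpow_natCast, ← Real.rpow_mul hτ.le]
      norm_num
      rw [Real.rpow_neg_one]

lemma cut_finite (τ : ℝ) : {k : ℤ | |(k : ℝ)| ≤ τ ^ (-(1 : ℝ) / 2)}.Finite := by
  apply (Set.finite_Icc (-⌈τ ^ (-(1 : ℝ) / 2)⌉) ⌈τ ^ (-(1 : ℝ) / 2)⌉).subset
  intro k hk
  have hk : |(k : ℝ)| ≤ τ ^ (-(1 : ℝ) / 2) := hk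
  rw [abs_le] at hk
  have h := Int.le_ceil (τ ^ (-(1 : ℝ) / 2))
  constructor
  · have : (((-⌈τ ^ (-(1 : ℝ) / 2)⌉ : ℤ)) : ℝ) ≤ k := by push_cast; linarith
    exact_mod_cast this
  · have : (k : ℝ) ≤ (⌈τ ^ (-(1 : ℝ) / 2)⌉ : ℝ) := by linarith
    exact_mod_cast this

lemma blockcount {τ : ℝ} (hτ : 0 < τ) [Fact (0 < 2 * Real.pi / τ)] (q : ℝ) (hq1 : 1 ≤ q) (hq : q ^ 8 = 2)
    (m n : ℕ) (x : ℤ × Cir τ) :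
    mG τ {y | (y ∈ SS τ ∧ lev τ y = m) ∧ (x - y ∈ SS τ ∧ lev τ (x - y) = n)}
      ≤ (8 : ℝ≥0∞) ^ 2 * (ENNReal.ofReal q) ^ (8 * min m n + 4 * max m n) := by
  have hpi := Real.pi_pos
  set E := {y | (y ∈ SS τ ∧ lev τ y = m) ∧ (x - y ∈ SS τ ∧ lev τ (x - y) = n)} with hE
  have hB : MeasurableSet {y | y ∈ SS τ ∧ lev τ y = m} :=
    (SS_meas τ).inter (lev_meas τ (measurableSet_singleton m))
  have hB' : MeasurableSet {y | y ∈ SS τ ∧ lev τ y = n} :=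
    (SS_meas τ).inter (lev_meas τ (measurableSet_singleton n))
  have hEm : MeasurableSet E := by
    apply hB.inter
    have : Measurable fun y : ℤ × Cir τ => x - y := by simp only [sub_eq_add_neg]; fun_prop
    exact this hB'
  obtain ⟨k, θ⟩ := x
  have hTfin : {l : ℤ | ∃ t : Cir τ, (l, t) ∈ E}.Finite :=
    (cut_finite τ).subset (fun l ⟨t, ht⟩ => ht.1.1)
  set T := hTfin.toFinset with hT
  have nnlt : ∀ y : ℤ × Cir τ, nn τ (y.2 - (((y.1 : ℝ) ^ 2 : ℝ) : Cir τ)) < 2 * 2 ^ lev τ y := fun y =>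
    lt_of_le_of_lt (jbr_ge _) (lt_lev τ y)
  -- the volume of each section
  have hsec : ∀ l : ℤ, volume {t : Cir τ | (l, t) ∈ E} ≤ ENNReal.ofReal (Real.pi * (2 * 2 ^ min m n)) := by
    intro l
    rcases le_total m n with h | h
    · rw [min_eq_left h]
      refine le_trans ?_ (vol_nn hτ (2 * 2 ^ m))
      have hms : MeasurableSet {θ : Cir τ | nn τ θ ≤ 2 * 2 ^ m} :=
        measurableSet_le (nn_cont τ).measurable measurable_const
      rw [← measure_preimage_add_right volume (-(((l : ℝ) ^ 2 : ℝ) : Cir τ)) {θ : Cir τ | nn τ θ ≤ 2 * 2 ^ m}]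
      apply measure_mono
      intro t ht
      have := nnlt (l, t)
      rw [ht.1.2] at this
      simp only [Set.mem_preimage, Set.mem_ofPred_eq, ← sub_eq_add_neg]
      exact this.le
    · rw [min_eq_right h]
      refine le_trans ?_ (vol_nn hτ (2 * 2 ^ n))
      have hms : MeasurableSet {θ : Cir τ | nn τ θ ≤ 2 * 2 ^ n} :=
        measurableSet_le (nn_cont τ).measurable measurable_const
      rw [← measure_preimage_add_right volume (-(θ - ((((k - l : ℤ) : ℝ) ^ 2 : ℝ) : Cir τ))) {θ : Cir τ | nn τ θ ≤ 2 * 2 ^ n}]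
      apply measure_mono
      intro t ht
      have := nnlt ((k, θ) - (l, t))
      rw [ht.2.2] at this
      simp only [Set.mem_preimage, Set.mem_ofPred_eq]
      rw [← nn_neg]
      refine le_trans (le_of_eq ?_) this.le
      congr 1
      simp only [Prod.mk_sub_mk]
      abel
  -- the number of sections
  have hcard : (T.card : ℝ) ≤ Real.sqrt (8 * Real.pi * 2 ^ max m n) + 2 := by
    apply card_sq T k
    intro a ha b hb
    simp only [hT, Set.Finite.mem_toFinset, Set.mem_ofPred_eq] at ha hb
    obtain ⟨s, hs⟩ := ha
    obtain ⟨t, ht⟩ := hb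
    set va : ℝ := (a : ℝ) ^ 2 + ((k - a : ℤ) : ℝ) ^ 2 with hva
    set vb : ℝ := (b : ℝ) ^ 2 + ((k - b : ℤ) : ℝ) ^ 2 with hvb
    have ca1 := cut_sq hτ a hs.1.1
    have ca2 := cut_sq hτ (k - a) hs.2.1
    have cb1 := cut_sq hτ b ht.1.1
    have cb2 := cut_sq hτ (k - b) ht.2.1
    have hm2 : ((2 : ℝ)) ^ m ≤ 2 ^ max m n := pow_le_pow_right₀ (by norm_num) (le_max_left _ _)
    have hn2 : ((2 : ℝ)) ^ n ≤ 2 ^ max m n := pow_le_pow_right₀ (by norm_num) (le_max_right _ _)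
    have hone : ∀ (l : ℤ) (r : Cir τ), (l, r) ∈ E →
        nn τ (θ - (((l : ℝ) ^ 2 + ((k - l : ℤ) : ℝ) ^ 2 : ℝ) : Cir τ)) ≤ 4 * 2 ^ max m n := by
      intro l r hr
      have h1 := nnlt (l, r)
      have h2 := nnlt ((k, θ) - (l, r))
      rw [hr.1.2] at h1
      rw [hr.2.2] at h2
      simp only [Prod.mk_sub_mk] at h1 h2
      have h3 := nn_add hτ (r - (((l : ℝ) ^ 2 : ℝ) : Cir τ)) (θ - r - ((((k - l : ℤ) : ℝ) ^ 2 : ℝ) : Cir τ))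
      have e : (r - (((l : ℝ) ^ 2 : ℝ) : Cir τ)) + (θ - r - ((((k - l : ℤ) : ℝ) ^ 2 : ℝ) : Cir τ))
          = θ - (((l : ℝ) ^ 2 + ((k - l : ℤ) : ℝ) ^ 2 : ℝ) : Cir τ) := by
        rw [AddCircle.coe_add]; abel
      rw [e] at h3
      linarith
    have h1 := hone a s hs
    have h2 := hone b t ht
    have h3 := nn_add hτ (θ - (vb : Cir τ)) (-(θ - (va : Cir τ)))
    rw [nn_neg] at h3
    have e : (θ - (vb : Cir τ)) + (-(θ - (va : Cir τ))) = ((va - vb : ℝ) : Cir τ) := by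
      rw [AddCircle.coe_sub]; abel
    rw [e] at h3
    have hvab : |va - vb| ≤ 2 / τ := by
      have e2 : 2 / τ = 1 / τ + 1 / τ := by ring
      rw [abs_le]
      constructor <;> nlinarith [sq_nonneg (a : ℝ), sq_nonneg (b : ℝ), sq_nonneg ((k - a : ℤ) : ℝ), sq_nonneg ((k - b : ℤ) : ℝ)]
    have h4 := nn_lower hτ (va - vb) (hvab.trans (by gcongr; exact Real.two_le_pi))
    have h5 : 2 / Real.pi * |va - vb| ≤ 8 * 2 ^ max m n := by linarith
    rw [div_mul_eq_mul_div, div_le_iff₀ hpi] at h5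
    have e3 : (2 * (a : ℝ) - k) ^ 2 - (2 * (b : ℝ) - k) ^ 2 = 2 * (va - vb) := by
      rw [hva, hvb]; push_cast; ring
    rw [e3, abs_mul, abs_two]
    linarith
  -- conclusion
  have hprod : mG τ E ≤ (T.card : ℝ≥0∞) * ENNReal.ofReal (Real.pi * (2 * 2 ^ min m n)) := by
    unfold mG
    rw [Measure.prod_apply hEm, lintegral_count]
    rw [tsum_eq_sum (s := T)]
    · rw [← nsmul_eq_mul]
      exact Finset.sum_le_card_nsmul _ _ _ (fun l _ => hsec l)
    · intro l hl
      have : (Prod.mk l ⁻¹' E) = ∅ := by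
        ext t
        simp only [Set.mem_preimage, Set.mem_empty_iff_false, iff_false]
        intro h
        apply hl
        rw [hT, Set.Finite.mem_toFinset]
        exact ⟨t, h⟩
      rw [this, measure_empty]
  refine hprod.trans ?_
  have hq0 : 0 ≤ q := by linarith
  rw [← ENNReal.ofReal_pow hq0, ← ENNReal.ofReal_natCast, ← ENNReal.ofReal_mul (by positivity)]
  have e8 : (8 : ℝ≥0∞) ^ 2 = ENNReal.ofReal (64 : ℝ) := by
    rw [ENNReal.ofReal_ofNat]; norm_num
  rw [e8, ← ENNReal.ofReal_mul (by norm_num)]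
  apply ENNReal.ofReal_le_ofReal
  rw [pow_add, pow_mul, hq]
  have hs : Real.sqrt (8 * Real.pi * 2 ^ max m n) ≤ 6 * q ^ (4 * max m n) := by
    apply Real.sqrt_le_iff.mpr
    refine ⟨by positivity, ?_⟩
    have : (6 * q ^ (4 * max m n)) ^ 2 = 36 * 2 ^ max m n := by
      rw [← hq]; ring
    rw [this]
    have := Real.pi_lt_d2
    gcongr
    linarith
  have h1q : 1 ≤ q ^ (4 * max m n) := one_le_pow₀ hq1
  have hc : (T.card : ℝ) ≤ 8 * q ^ (4 * max m n) := by linarith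
  calc (T.card : ℝ) * (Real.pi * (2 * 2 ^ min m n)) ≤ (8 * q ^ (4 * max m n)) * (4 * (2 * 2 ^ min m n)) := by
        gcongr
        exact Real.pi_le_four
    _ = _ := by ring
end conc

section four

def FT (τ : ℝ) (a : ℤ → ℤ → ℂ) (x : ℤ × Cir τ) : ℂ := (τ : ℂ) * ∑' m : ℤ, a m x.1 * fourier m x.2

lemma FT_eq (τ : ℝ) (a : ℤ → ℤ → ℂ) (M : Finset ℤ) (hM : ∀ m, m ∉ M → ∀ k, a m k = 0)
    (x : ℤ × Cir τ) : FT τ a x = (τ : ℂ) * ∑ m ∈ M, a m x.1 * fourier m x.2 := by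
  unfold FT
  rw [tsum_eq_sum (s := M)]
  intro m hm
  rw [hM m hm, zero_mul]

lemma FT_cont (τ : ℝ) (a : ℤ → ℤ → ℂ) (M : Finset ℤ) (hM : ∀ m, m ∉ M → ∀ k, a m k = 0) (k : ℤ) :
    Continuous fun θ : Cir τ => FT τ a (k, θ) := by
  simp only [FT_eq τ a M hM]
  fun_prop

lemma FT_meas (τ : ℝ) [Fact (0 < 2 * Real.pi / τ)] (a : ℤ → ℤ → ℂ) (M : Finset ℤ)
    (hM : ∀ m, m ∉ M → ∀ k, a m k = 0) : Measurable (FT τ a) := by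
  apply measurable_from_prod_countable_right
  intro k
  exact (FT_cont τ a M hM k).measurable

lemma int_four (P : ℝ) [hP : Fact (0 < P)] (n : ℤ) :
    ∫ t : AddCircle P, (fourier n t : ℂ) = if n = 0 then (P : ℂ) else 0 := by
  rw [AddCircle.volume_eq_smul_haarAddCircle, integral_smul_measure]
  have h0 := congrFun (fourierCoeff_fourier (T := P) n) 0
  have h1 : fourierCoeff (fourier n : AddCircle P → ℂ) 0 = ∫ t : AddCircle P, (fourier n t : ℂ) ∂haarAddCircle := by
    unfold fourierCoeff
    congr 1; ext t
    simp only [neg_zero, fourier_zero, one_smul]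
  rw [← h1, h0, ENNReal.toReal_ofReal hP.out.le]
  split_ifs with h
  · subst h; simp
  · rw [Pi.single_eq_of_ne (by tauto)]; simp

lemma four_add (P : ℝ) (n : ℤ) (x y : AddCircle P) : (fourier n (x + y) : ℂ) = fourier n x * fourier n y := by
  simp only [fourier_apply, smul_add, AddCircle.toCircle_add, Circle.coe_mul]

lemma four_negx (P : ℝ) (n : ℤ) (x : AddCircle P) : (fourier n (-x) : ℂ) = fourier (-n) x := by
  simp only [fourier_apply, smul_neg, neg_smul]

lemma conv_seq {τ : ℝ} (hτ : 0 < τ) [Fact (0 < 2 * Real.pi / τ)] (α β : ℤ → ℂ) (M : Finset ℤ) (θ : Cir τ) :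
    (2 * Real.pi : ℂ) * ((τ : ℂ) * ∑ m ∈ M, α m * β m * fourier m θ) =
      ∫ t : Cir τ, ((τ : ℂ) * ∑ m ∈ M, α m * fourier m t) * ((τ : ℂ) * ∑ m ∈ M, β m * fourier m (θ - t)) := by
  have h1 : ∀ t : Cir τ, ((τ : ℂ) * ∑ m ∈ M, α m * fourier m t) * ((τ : ℂ) * ∑ m ∈ M, β m * fourier m (θ - t))
      = ∑ m ∈ M, ∑ n ∈ M, ((τ : ℂ) ^ 2 * (α m * β n * fourier n θ)) * fourier (m - n) t := by
    intro t
    simp only [sub_eq_add_neg, four_add, four_negx]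
    simp only [fourier_add]
    calc _ = (τ : ℂ) ^ 2 * ((∑ m ∈ M, α m * fourier m t) * (∑ m ∈ M, β m * (fourier m θ * fourier (-m) t))) := by ring
      _ = _ := by
        rw [Finset.sum_mul_sum, Finset.mul_sum]
        refine Finset.sum_congr rfl fun m _ => ?_
        rw [Finset.mul_sum]
        refine Finset.sum_congr rfl fun n _ => ?_
        ring
  simp only [h1]
  have hint : ∀ (c : ℂ) (j : ℤ), Integrable (fun t : Cir τ => c * (fourier j t : ℂ)) := fun c j =>
    (by fun_prop : Continuous fun t : Cir τ => c * (fourier j t : ℂ)).integrable_of_hasCompactSupport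
      (HasCompactSupport.of_compactSpace _)
  rw [integral_finsetSum _ (fun m _ => integrable_finsetSum _ (fun n _ => hint _ _))]
  have h2 : ∀ m ∈ M, ∫ t : Cir τ, ∑ n ∈ M, ((τ : ℂ) ^ 2 * (α m * β n * fourier n θ)) * fourier (m - n) t
      = (τ : ℂ) ^ 2 * (α m * β m * fourier m θ) * (2 * Real.pi / τ : ℝ) := by
    intro m hm
    rw [integral_finsetSum _ (fun n _ => hint _ _)]
    simp only [integral_const_mul, int_four]
    rw [Finset.sum_eq_single m]
    · simp
    · intro n _ hn
      rw [if_neg (by omega), mul_zero]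
    · intro h; exact absurd hm h
  rw [Finset.sum_congr rfl h2, Finset.mul_sum, Finset.mul_sum]
  refine Finset.sum_congr rfl fun m _ => ?_
  have : (τ : ℂ) ≠ 0 := by exact_mod_cast hτ.ne'
  push_cast
  field_simp

lemma FT_conv {τ : ℝ} (hτ : 0 < τ) [Fact (0 < 2 * Real.pi / τ)] (a b c : ℤ → ℤ → ℂ) (M A : Finset ℤ)
    (ha : ∀ m, m ∉ M → ∀ k, a m k = 0) (hb : ∀ m, m ∉ M → ∀ k, b m k = 0)
    (hc : ∀ m k, c m k = ∑ l ∈ A, a m l * b m (k - l)) (x : ℤ × Cir τ) :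
    ‖FT τ c x‖ₑ ≤ cv (mG τ) (fun y => ‖FT τ a y‖ₑ) (fun y => ‖FT τ b y‖ₑ) x := by
  obtain ⟨k, θ⟩ := x
  have hcM : ∀ m, m ∉ M → ∀ k, c m k = 0 := by
    intro m hm k
    rw [hc]
    exact Finset.sum_eq_zero fun l _ => by rw [ha m hm, zero_mul]
  have hpi := Real.pi_gt_three
  have e1 : FT τ c (k, θ) = ∑ l ∈ A, (τ : ℂ) * ∑ m ∈ M, a m l * b m (k - l) * fourier m θ := by
    rw [FT_eq τ c M hcM]
    simp only [hc, Finset.sum_mul]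
    rw [Finset.sum_comm, Finset.mul_sum]
  have e2 : ∀ l, ‖(τ : ℂ) * ∑ m ∈ M, a m l * b m (k - l) * fourier m θ‖ₑ
      ≤ ∫⁻ t : Cir τ, ‖FT τ a (l, t)‖ₑ * ‖FT τ b (k - l, θ - t)‖ₑ := by
    intro l
    have h := conv_seq hτ (fun m => a m l) (fun m => b m (k - l)) M θ
    have h1 : ‖(τ : ℂ) * ∑ m ∈ M, a m l * b m (k - l) * fourier m θ‖ₑ
        ≤ ‖(2 * Real.pi : ℂ) * ((τ : ℂ) * ∑ m ∈ M, a m l * b m (k - l) * fourier m θ)‖ₑ := by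
      rw [enorm_le_iff_norm_le, norm_mul (2 * Real.pi : ℂ)]
      apply le_mul_of_one_le_left (norm_nonneg _)
      simp
      rw [abs_of_pos (by linarith)]
      linarith
    refine h1.trans ?_
    rw [h]
    refine (enorm_integral_le_lintegral_enorm _).trans (le_of_eq ?_)
    congr 1; ext t
    rw [FT_eq τ a M ha, FT_eq τ b M hb, enorm_mul]
  rw [e1]
  refine (enorm_sum_le _ _).trans ?_
  refine (Finset.sum_le_sum fun l _ => e2 l).trans ?_
  unfold cv
  rw [lint_mG]
  · exact ENNReal.sum_le_tsum A
  · have h1 := FT_meas τ a M ha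
    have h2 := FT_meas τ b M hb
    simp only [sub_eq_add_neg]
    fun_prop

lemma ofReal_tsum' {f : ℤ → ℝ} (h0 : ∀ k, 0 ≤ f k) (hs : Summable f) :
    ENNReal.ofReal (∑' k, f k) = ∑' k, ENNReal.ofReal (f k) := ENNReal.ofReal_tsum_of_nonneg h0 hs

def Wt (τ s b : ℝ) (x : ℤ × Cir τ) : ℝ≥0∞ := ENNReal.ofReal (jbr x.1 ^ s * Lg τ x ^ b)

lemma Lg_pos (τ : ℝ) (x : ℤ × Cir τ) : 0 < Lg τ x := lt_of_lt_of_le one_pos (jbr_one_le _)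
lemma jbr_pos (x : ℝ) : 0 < jbr x := lt_of_lt_of_le one_pos (jbr_one_le _)

lemma Wt_meas (τ s b : ℝ) [Fact (0 < 2 * Real.pi / τ)] : Measurable (Wt τ s b) := by
  unfold Wt
  apply ENNReal.measurable_ofReal.comp
  apply Measurable.mul
  · exact (measurable_of_countable (fun k : ℤ => jbr k ^ s)).comp measurable_fst
  · exact (Lg_meas τ).pow_const b

lemma Xd_eq {τ : ℝ} (hτ : 0 < τ) [Fact (0 < 2 * Real.pi / τ)] (s b : ℝ) (u : ℤ → Torus → ℂ) (M : Finset ℤ)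
    (hM : ∀ m, m ∉ M → ∀ k, fourierCoeff (u m) k = 0)
    (hs : ∀ m, Summable fun k : ℤ => jbr k ^ (2 * s) * ‖fourierCoeff (u m) k‖ ^ 2) :
    ENNReal.ofReal (XdNorm τ s b u) =
      N2 (mG τ) (fun x => Wt τ s b x * ‖FT τ (fun m k => fourierCoeff (u m) k) x‖ₑ) := by
  set a : ℤ → ℤ → ℂ := fun m k => fourierCoeff (u m) k with ha
  let φ : ℤ → Cir τ → ℝ := fun k θ => jbr k ^ (2 * s) * Lg τ (k, θ) ^ (2 * b) * ‖FT τ a (k, θ)‖ ^ 2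
  have hφ0 : ∀ k θ, 0 ≤ φ k θ := fun k θ => by
    have := Lg_pos τ (k, θ); have := jbr_pos k; positivity
  have hφc : ∀ k, Continuous (φ k) := by
    intro k
    have h1 := FT_cont τ a M hM k
    have h2 : Continuous fun θ : Cir τ => Lg τ (k, θ) := by
      unfold Lg
      exact jbr_cont.comp ((nn_cont τ).comp (by fun_prop))
    have h3 : Continuous fun θ : Cir τ => Lg τ (k, θ) ^ (2 * b) :=
      h2.rpow_const fun θ => Or.inl (Lg_pos _ _).ne'
    fun_prop
  obtain ⟨B, hB⟩ : ∃ B, ∀ θ : Cir τ, ‖jbr (nn τ θ) ^ (2 * b)‖ ≤ B := by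
    obtain ⟨B, hB⟩ := isCompact_univ.exists_bound_of_continuousOn (f := fun θ : Cir τ => jbr (nn τ θ) ^ (2 * b))
      (((jbr_cont.comp (nn_cont τ)).rpow_const fun θ => Or.inl (jbr_pos _).ne').continuousOn)
    exact ⟨B, fun θ => hB θ (Set.mem_univ _)⟩
  let bd : ℤ → ℝ := fun k => B * (τ ^ 2 * (M.card * ∑ m ∈ M, jbr k ^ (2 * s) * ‖a m k‖ ^ 2))
  have hbd : Summable bd := by
    apply Summable.mul_left
    apply Summable.mul_left
    apply Summable.mul_left
    exact summable_sum fun m _ => hs m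
  have hle : ∀ k θ, ‖φ k θ‖ ≤ bd k := by
    intro k θ
    rw [Real.norm_of_nonneg (hφ0 k θ)]
    have h1 : Lg τ (k, θ) ^ (2 * b) ≤ B := (le_abs_self _).trans (hB _)
    have hBn : 0 ≤ B := (norm_nonneg _).trans (hB θ)
    have h2 : ‖FT τ a (k, θ)‖ ^ 2 ≤ τ ^ 2 * (M.card * ∑ m ∈ M, ‖a m k‖ ^ 2) := by
      rw [FT_eq τ a M hM, norm_mul, mul_pow]
      simp only [Complex.norm_real, Real.norm_eq_abs, sq_abs]
      gcongr
      calc ‖∑ m ∈ M, a m k * fourier m θ‖ ^ 2 ≤ (∑ m ∈ M, ‖a m k‖) ^ 2 := by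
            gcongr
            refine (norm_sum_le _ _).trans (Finset.sum_le_sum fun m _ => ?_)
            rw [norm_mul, fourier_apply, Circle.norm_coe, mul_one]
        _ ≤ _ := sq_sum_le_card_mul_sum_sq
    have hj := jbr_pos k
    calc φ k θ ≤ jbr k ^ (2 * s) * B * (τ ^ 2 * (M.card * ∑ m ∈ M, ‖a m k‖ ^ 2)) := by
          simp only [φ]; gcongr
      _ = bd k := by simp only [bd]; rw [← Finset.mul_sum]; ring
  have hsum : ∀ θ, Summable fun k => φ k θ := fun θ =>
    Summable.of_norm_bounded hbd (fun k => hle k θ)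
  have hcont : Continuous fun θ => ∑' k, φ k θ := continuous_tsum hφc hbd hle
  have hsq : ENNReal.ofReal (XdNorm τ s b u) ^ 2 =
      N2 (mG τ) (fun x => Wt τ s b x * ‖FT τ a x‖ₑ) ^ 2 := by
    have hX : XdNorm τ s b u ^ 2 = ∫ σ in Set.Ioc (-(Real.pi / τ)) (Real.pi / τ), ∑' k, φ k (σ : Cir τ) := by
      unfold XdNorm
      have e : ∀ σ : ℝ, (∑' k : ℤ, jbr k ^ (2 * s) * jbr ‖dtau τ (σ - (k : ℝ) ^ 2)‖ ^ (2 * b) *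
          ‖(τ : ℂ) * ∑' m : ℤ, fourierCoeff (u m) k * Complex.exp (Complex.I * m * τ * σ)‖ ^ 2)
          = ∑' k, φ k (σ : Cir τ) := by
        intro σ
        congr 1; ext k
        simp only [φ, Lg, FT, ha, four_coe hτ]
        rw [← AddCircle.coe_sub, nn_coe hτ]
      simp only [e]
      rw [Real.sq_sqrt]
      exact integral_nonneg fun σ => tsum_nonneg fun k => hφ0 k _
    rw [← ENNReal.ofReal_pow (show 0 ≤ XdNorm τ s b u from Real.sqrt_nonneg _), hX, N2_sq]
    rw [ofReal_integral_eq_lintegral_ofReal]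
    · have hend : Real.pi / τ = -(Real.pi / τ) + 2 * Real.pi / τ := by ring
      rw [hend]
      rw [show -(-(Real.pi / τ) + 2 * Real.pi / τ) = -(Real.pi / τ) by ring]
      rw [AddCircle.lintegral_preimage _ _ (fun θ : Cir τ => ENNReal.ofReal (∑' k, φ k θ))]
      simp only [ofReal_tsum' (fun k => hφ0 k _) (hsum _)]
      rw [lintegral_tsum (fun k => ((hφc k).measurable.ennreal_ofReal).aemeasurable), lint_mG]
      · congr 1; ext k; congr 1; ext θ
        simp only [φ, Wt]
        have hj := jbr_pos k
        have hL := Lg_pos τ (k, θ)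
        rw [← ofReal_norm, ← ENNReal.ofReal_mul (by positivity), ← ENNReal.ofReal_pow (by positivity)]
        congr 1
        rw [mul_pow, mul_pow, ← Real.rpow_natCast (jbr k ^ s), ← Real.rpow_natCast (Lg τ (k,θ) ^ b),
          ← Real.rpow_mul hj.le, ← Real.rpow_mul hL.le]
        push_cast
        rw [mul_comm s, mul_comm b]
      · have h1 := Wt_meas τ s b
        have h2 := FT_meas τ a M hM
        fun_prop
    · have : Continuous fun σ : ℝ => ∑' k, φ k (σ : Cir τ) := hcont.comp (AddCircle.continuous_mk' _)
      exact this.integrableOn_Ioc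
    · exact Filter.Eventually.of_forall fun σ => tsum_nonneg fun k => hφ0 k _
  exact le_antisymm (le_of_sq_le hsq.le) (le_of_sq_le hsq.ge)

end four

section fin

def cutF (τ : ℝ) : Finset ℤ := (cut_finite τ).toFinset

lemma mem_cutF (τ : ℝ) (k : ℤ) : k ∈ cutF τ ↔ |(k : ℝ)| ≤ τ ^ (-(1 : ℝ) / 2) := by
  unfold cutF
  rw [Set.Finite.mem_toFinset]; rfl

lemma projC_eq (τ : ℝ) (f : Torus → ℂ) (x : Torus) :
    projC τ f x = ∑ k ∈ cutF τ, fourierCoeff f k * fourier k x := by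
  unfold projC
  rw [tsum_eq_sum (s := cutF τ)]
  · refine Finset.sum_congr rfl fun k hk => ?_
    rw [if_pos ((mem_cutF τ k).mp hk)]
  · intro k hk
    rw [if_neg (fun h => hk ((mem_cutF τ k).mpr h))]

lemma projC_cont (τ : ℝ) (f : Torus → ℂ) : Continuous (projC τ f) := by
  have : projC τ f = fun x => ∑ k ∈ cutF τ, fourierCoeff f k * fourier k x := funext (projC_eq τ f)
  rw [this]; fun_prop

lemma cont_int {g : Torus → ℂ} (hg : Continuous g) : Integrable g haarAddCircle :=
  hg.integrable_of_hasCompactSupport (HasCompactSupport.of_compactSpace _)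

lemma fc_proj_mul (τ : ℝ) (f g : Torus → ℂ) (hg : Continuous g) (k : ℤ) :
    fourierCoeff (fun y => projC τ f y * g y) k
      = ∑ l ∈ cutF τ, fourierCoeff f l * fourierCoeff g (k - l) := by
  unfold fourierCoeff
  have h1 : ∀ t : Torus, (fourier (-k) t : ℂ) • (projC τ f t * g t)
      = ∑ l ∈ cutF τ, fourierCoeff f l * ((fourier (-(k - l)) t : ℂ) • g t) := by
    intro t
    rw [projC_eq, Finset.sum_mul, Finset.smul_sum]
    refine Finset.sum_congr rfl fun l _ => ?_
    have : -(k - l) = -k + l := by ring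
    rw [this, fourier_add]
    simp only [smul_eq_mul]; ring
  simp only [h1]
  rw [integral_finsetSum]
  · refine Finset.sum_congr rfl fun l _ => ?_
    rw [integral_const_mul]; rfl
  · intro l _
    apply Integrable.const_mul
    exact cont_int (by fun_prop)

lemma fc_proj (τ : ℝ) (f : Torus → ℂ) (k : ℤ) :
    fourierCoeff (projC τ f) k = if |(k : ℝ)| ≤ τ ^ (-(1 : ℝ) / 2) then fourierCoeff f k else 0 := by
  have h := fc_proj_mul τ f (fun _ => 1) continuous_const k
  simp only [mul_one] at h
  have h1 : ∀ j : ℤ, fourierCoeff (fun _ : Torus => (1 : ℂ)) j = if j = 0 then 1 else 0 := by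
    intro j
    have e : (fun _ : Torus => (1 : ℂ)) = (fourier 0 : Torus → ℂ) := by ext x; simp
    rw [e, fourierCoeff_fourier, Pi.single_apply]
  change fourierCoeff (fun y => projC τ f y) k = _
  rw [h]
  simp only [h1]
  by_cases hk : |(k : ℝ)| ≤ τ ^ (-(1 : ℝ) / 2)
  · rw [if_pos hk, Finset.sum_eq_single k]
    · simp
    · intro l _ hl
      rw [if_neg (by omega), mul_zero]
    · intro h'; exact absurd ((mem_cutF τ k).mpr hk) h'
  · rw [if_neg hk]
    apply Finset.sum_eq_zero
    intro l hl
    rw [if_neg, mul_zero]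
    intro h'
    have : l = k := by omega
    exact hk ((mem_cutF τ k).mp (this ▸ hl))

lemma jbr_mul (a b : ℝ) : jbr (a + b) ≤ 2 * (jbr a * jbr b) := by
  unfold jbr
  rw [← Real.sqrt_mul (by positivity)]
  apply Real.sqrt_le_iff.mpr
  refine ⟨by positivity, ?_⟩
  rw [mul_pow, Real.sq_sqrt (by positivity)]
  nlinarith [sq_nonneg (a - b), sq_nonneg (a * b), sq_nonneg a, sq_nonneg b]

def Jw (τ s : ℝ) (x : ℤ × Cir τ) : ℝ≥0∞ := ENNReal.ofReal (jbr x.1 ^ s)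

lemma Jw_meas (τ s : ℝ) [Fact (0 < 2 * Real.pi / τ)] : Measurable (Jw τ s) := by
  unfold Jw
  exact ENNReal.measurable_ofReal.comp ((measurable_of_countable (fun k : ℤ => jbr k ^ s)).comp measurable_fst)

lemma Jw_mul {τ s : ℝ} (hs : 0 ≤ s) (x y : ℤ × Cir τ) :
    Jw τ s x ≤ ENNReal.ofReal (2 ^ s) * (Jw τ s y * Jw τ s (x - y)) := by
  unfold Jw
  have h1 := jbr_pos (x.1 : ℝ)
  have h2 := jbr_pos (y.1 : ℝ)
  have h3 := jbr_pos ((x - y).1 : ℝ)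
  rw [← ENNReal.ofReal_mul (by positivity), ← ENNReal.ofReal_mul (by positivity)]
  apply ENNReal.ofReal_le_ofReal
  rw [← Real.mul_rpow h2.le h3.le, ← Real.mul_rpow (by norm_num) (by positivity)]
  apply Real.rpow_le_rpow h1.le _ hs
  have := jbr_mul (y.1 : ℝ) ((x - y).1 : ℝ)
  have e : (y.1 : ℝ) + ((x - y).1 : ℝ) = x.1 := by simp
  rwa [e] at this

lemma Jw_cv {τ s : ℝ} (hs : 0 ≤ s) [Fact (0 < 2 * Real.pi / τ)] {f g : ℤ × Cir τ → ℝ≥0∞}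
    (hf : Measurable f) (hg : Measurable g) (x : ℤ × Cir τ) :
    Jw τ s x * cv (mG τ) f g x ≤ ENNReal.ofReal (2 ^ s) *
      cv (mG τ) (fun y => Jw τ s y * f y) (fun y => Jw τ s y * g y) x := by
  have hJ := Jw_meas τ s
  unfold cv
  rw [← lintegral_const_mul, ← lintegral_const_mul]
  · apply lintegral_mono
    intro y
    calc Jw τ s x * (f y * g (x - y)) ≤ (ENNReal.ofReal (2 ^ s) * (Jw τ s y * Jw τ s (x - y))) * (f y * g (x - y)) := by
          gcongr; exact Jw_mul hs x y
      _ = _ := by ring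
  · simp only [sub_eq_add_neg]; fun_prop
  · simp only [sub_eq_add_neg]; fun_prop

lemma cv_comm {G : Type*} [AddCommGroup G] [MeasurableSpace G] [MeasurableAdd₂ G] [MeasurableNeg G]
    (μ : Measure G) (hμ : RefInv μ) {f g : G → ℝ≥0∞} (hf : Measurable f) (hg : Measurable g) (x : G) :
    cv μ f g x = cv μ g f x := by
  unfold cv
  rw [← hμ x]
  · congr 1; ext y
    rw [sub_sub_cancel, mul_comm]
  · simp only [sub_eq_add_neg]; fun_prop

lemma cv_mono {G : Type*} [AddCommGroup G] [MeasurableSpace G]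
    (μ : Measure G) {f g f' g' : G → ℝ≥0∞} (hf : ∀ x, f x ≤ f' x) (hg : ∀ x, g x ≤ g' x) (x : G) :
    cv μ f g x ≤ cv μ f' g' x := by
  unfold cv
  exact lintegral_mono fun y => mul_le_mul' (hf y) (hg _)

def q0 : ℝ := 2 ^ (1 / 8 : ℝ)
lemma q0_pow : q0 ^ 8 = 2 := by
  unfold q0
  rw [← Real.rpow_natCast, ← Real.rpow_mul (by norm_num)]; norm_num
lemma q0_gt : 1 < q0 := Real.one_lt_rpow (by norm_num) (by norm_num)

def wL (τ b : ℝ) (x : ℤ × Cir τ) : ℝ≥0∞ := ENNReal.ofReal (Lg τ x ^ b)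

lemma wL_meas (τ b : ℝ) [Fact (0 < 2 * Real.pi / τ)] : Measurable (wL τ b) := by
  unfold wL
  exact ENNReal.measurable_ofReal.comp ((Lg_meas τ).pow_const b)

def Cb : ℝ≥0∞ := 8 * (2 * (1 - (ENNReal.ofReal q0)⁻¹)⁻¹)

lemma Cb_ne_top : Cb ≠ ⊤ := by
  unfold Cb
  apply ENNReal.mul_ne_top (by norm_num)
  apply ENNReal.mul_ne_top (by norm_num)
  rw [ENNReal.inv_ne_top]
  have : (ENNReal.ofReal q0)⁻¹ < 1 := by
    rw [ENNReal.inv_lt_one, ENNReal.one_lt_ofReal]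
    exact q0_gt
  exact (tsub_pos_of_lt this).ne'

lemma bilinC {τ : ℝ} (hτ : 0 < τ) [Fact (0 < 2 * Real.pi / τ)] {f g : ℤ × Cir τ → ℝ≥0∞}
    (hf : Measurable f) (hg : Measurable g)
    (hfS : ∀ x, x ∉ SS τ → f x = 0) (hgS : ∀ x, x ∉ SS τ → g x = 0) :
    N2 (mG τ) (cv (mG τ) f g) ≤ Cb *
      (N2 (mG τ) (fun x => wL τ (3 / 8) x * f x) * N2 (mG τ) (fun x => wL τ (3 / 8) x * g x)) := by
  have hq := q0_gt
  refine bilin (mG τ) (refInv_mG τ) (SS τ) (SS_meas τ) (lev τ) (lev_meas τ) (wL τ (3 / 8)) (wL_meas τ _)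
    (ENNReal.ofReal q0) 8 ?_ ENNReal.ofReal_ne_top ?_
    (fun m n x => blockcount hτ q0 hq.le q0_pow m n x) hf hg hfS hgS
  · rw [ENNReal.one_le_ofReal]; exact hq.le
  · intro x
    unfold wL
    rw [← ENNReal.ofReal_pow (by linarith)]
    apply ENNReal.ofReal_le_ofReal
    calc q0 ^ (3 * lev τ x) = ((2 : ℝ) ^ lev τ x) ^ (3 / 8 : ℝ) := by
          unfold q0
          rw [← Real.rpow_natCast, ← Real.rpow_natCast, ← Real.rpow_mul (by norm_num), ← Real.rpow_mul (by norm_num)]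
          congr 1; push_cast; ring
      _ ≤ _ := Real.rpow_le_rpow (by positivity) (lev_le τ x) (by norm_num)

lemma FT_supp (τ : ℝ) (u : ℤ → Torus → ℂ) (x : ℤ × Cir τ) (hx : x ∉ SS τ) :
    FT τ (fun m k => fourierCoeff (projC τ (u m)) k) x = 0 := by
  unfold FT
  have : ∀ m, fourierCoeff (projC τ (u m)) x.1 = 0 := fun m => by
    have hx' : ¬ |(x.1 : ℝ)| ≤ τ ^ (-(1 : ℝ) / 2) := hx
    rw [fc_proj, if_neg hx']
  simp [this]

lemma FT_le (τ : ℝ) (u : ℤ → Torus → ℂ) (x : ℤ × Cir τ) :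
    ‖FT τ (fun m k => fourierCoeff (projC τ (u m)) k) x‖ₑ ≤ ‖FT τ (fun m k => fourierCoeff (u m) k) x‖ₑ := by
  by_cases hx : x ∈ SS τ
  · have : FT τ (fun m k => fourierCoeff (projC τ (u m)) k) x = FT τ (fun m k => fourierCoeff (u m) k) x := by
      unfold FT
      simp only [fc_proj]
      have : |(x.1 : ℝ)| ≤ τ ^ (-(1 : ℝ) / 2) := hx
      simp [this]
    rw [this]
  · rw [FT_supp τ u x hx]; simp

lemma fc_zero (k : ℤ) : fourierCoeff (0 : Torus → ℂ) k = 0 := by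
  simp [fourierCoeff]

lemma main_est {τ s : ℝ} (hs : 0 ≤ s) (hτ : 0 < τ) [Fact (0 < 2 * Real.pi / τ)] (u v w : ℤ → Torus → ℂ)
    (hu : ∀ m, Summable fun k : ℤ => jbr k ^ (2 * s) * ‖fourierCoeff (u m) k‖ ^ 2)
    (hv : ∀ m, Summable fun k : ℤ => jbr k ^ (2 * s) * ‖fourierCoeff (v m) k‖ ^ 2)
    (hw : ∀ m, Summable fun k : ℤ => jbr k ^ (2 * s) * ‖fourierCoeff (w m) k‖ ^ 2)
    (M : Finset ℤ) (uM : ∀ m, m ∉ M → u m = 0) (vM : ∀ m, m ∉ M → v m = 0) (wM : ∀ m, m ∉ M → w m = 0) :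
    ENNReal.ofReal (XdNorm τ s (-(3 / 8))
          (fun n => projC τ fun y => projC τ (u n) y * projC τ (v n) y * projC τ (w n) y))
      ≤ (ENNReal.ofReal (2 ^ s) ^ 2 * Cb ^ 2) * (ENNReal.ofReal (XdNorm τ s (3 / 8) u) *
        ENNReal.ofReal (XdNorm τ s (3 / 8) v) * ENNReal.ofReal (XdNorm τ s (3 / 8) w)) := by
  set cs := ENNReal.ofReal (2 ^ s) with hcs
  have zero_of : ∀ (u : ℤ → Torus → ℂ), (∀ m, m ∉ M → u m = 0) → ∀ m, m ∉ M → ∀ k, fourierCoeff (u m) k = 0 := by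
    intro u hu m hm k
    rw [hu m hm, fc_zero]
  have pzero_of : ∀ (u : ℤ → Torus → ℂ), (∀ m, m ∉ M → u m = 0) → ∀ m, m ∉ M → ∀ k, fourierCoeff (projC τ (u m)) k = 0 := by
    intro u hu m hm k
    rw [fc_proj, zero_of u hu m hm, ite_self]
  let fa : (ℤ → Torus → ℂ) → ℤ → ℤ → ℂ := fun u m k => fourierCoeff (projC τ (u m)) k
  let pr : ℤ → ℤ → ℂ := fun m k => fourierCoeff (fun y => projC τ (u m) y * projC τ (v m) y) k
  let ee : ℤ → ℤ → ℂ := fun m k => fourierCoeff (fun y => projC τ (u m) y * projC τ (v m) y * projC τ (w m) y) k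
  have onA : ∀ (u : ℤ → Torus → ℂ) m l, l ∈ cutF τ → fourierCoeff (u m) l = fa u m l := by
    intro u m l hl
    simp only [fa]
    rw [fc_proj, if_pos ((mem_cutF τ l).mp hl)]
  have hpr : ∀ m k, pr m k = ∑ l ∈ cutF τ, fa u m l * fa v m (k - l) := by
    intro m k
    simp only [pr]
    rw [fc_proj_mul τ _ _ (projC_cont τ _)]
    exact Finset.sum_congr rfl fun l hl => by rw [onA u m l hl]
  have hee : ∀ m k, ee m k = ∑ l ∈ cutF τ, fa w m l * pr m (k - l) := by
    intro m k
    simp only [ee, pr]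
    have : (fun y => projC τ (u m) y * projC τ (v m) y * projC τ (w m) y)
        = fun y => projC τ (w m) y * (projC τ (u m) y * projC τ (v m) y) := by ext y; ring
    rw [this, fc_proj_mul τ (w m) (fun y => projC τ (u m) y * projC τ (v m) y) ((projC_cont τ _).mul (projC_cont τ _))]
    exact Finset.sum_congr rfl fun l hl => by rw [onA w m l hl]
  have prM : ∀ m, m ∉ M → ∀ k, pr m k = 0 := by
    intro m hm k
    rw [hpr]
    exact Finset.sum_eq_zero fun l _ => by simp only [fa]; rw [pzero_of u uM m hm, zero_mul]
  have eeM : ∀ m, m ∉ M → ∀ k, ee m k = 0 := by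
    intro m hm k
    rw [hee]
    exact Finset.sum_eq_zero fun l _ => by rw [prM m hm, mul_zero]
  let F : ℤ → Torus → ℂ := fun n y => projC τ (u n) y * projC τ (v n) y * projC τ (w n) y
  have FM : ∀ m, m ∉ M → ∀ k, fourierCoeff (projC τ (F m)) k = 0 := by
    intro m hm k
    rw [fc_proj]
    have : fourierCoeff (F m) k = 0 := eeM m hm k
    rw [this, ite_self]
  have Fs : ∀ m, Summable fun k : ℤ => jbr k ^ (2 * s) * ‖fourierCoeff (projC τ (F m)) k‖ ^ 2 := by
    intro m
    apply summable_of_ne_finset_zero (s := cutF τ)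
    intro k hk
    rw [fc_proj, if_neg (fun h => hk ((mem_cutF τ k).mpr h))]
    simp
  -- measurability
  have mu := FT_meas τ (fa u) M (pzero_of u uM)
  have mv := FT_meas τ (fa v) M (pzero_of v vM)
  have mw := FT_meas τ (fa w) M (pzero_of w wM)
  have mp := FT_meas τ pr M prM
  have mF := FT_meas τ (fa F) M FM
  have mJ := Jw_meas τ s
  have mL := wL_meas τ (3 / 8)
  have mL' := wL_meas τ (-(3 / 8))
  let f : ℤ × Cir τ → ℝ≥0∞ := fun x => Jw τ s x * ‖FT τ (fa u) x‖ₑ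
  let g : ℤ × Cir τ → ℝ≥0∞ := fun x => Jw τ s x * ‖FT τ (fa v) x‖ₑ
  let h : ℤ × Cir τ → ℝ≥0∞ := fun x => Jw τ s x * ‖FT τ (fa w) x‖ₑ
  let Z : ℤ × Cir τ → ℝ≥0∞ := fun x => Wt τ s (-(3 / 8)) x * ‖FT τ (fa F) x‖ₑ
  let z : ℤ × Cir τ → ℝ≥0∞ := fun x => wL τ (-(3 / 8)) x * Z x
  have mf : Measurable f := by fun_prop
  have mg : Measurable g := by fun_prop
  have mh : Measurable h := by fun_prop
  have mZ : Measurable Z := by have := Wt_meas τ s (-(3 / 8)); fun_prop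
  have mz : Measurable z := by fun_prop
  have hWt : ∀ b x, Wt τ s b x = wL τ b x * Jw τ s x := by
    intro b x
    unfold Wt wL Jw
    have h1 := jbr_pos (x.1 : ℝ)
    have h2 := Lg_pos τ x
    rw [← ENNReal.ofReal_mul (by positivity), mul_comm]
  have supp : ∀ u : ℤ → Torus → ℂ, ∀ x, x ∉ SS τ → Jw τ s x * ‖FT τ (fa u) x‖ₑ = 0 := by
    intro u x hx
    have : FT τ (fa u) x = 0 := FT_supp τ u x hx
    rw [this]; simp
  have zsupp : ∀ x, x ∉ SS τ → z x = 0 := by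
    intro x hx
    have : FT τ (fa F) x = 0 := FT_supp τ F x hx
    simp only [z, Z]
    rw [this]; simp
  -- norms
  have nrm : ∀ u : ℤ → Torus → ℂ, (∀ m, m ∉ M → u m = 0) →
      (∀ m, Summable fun k : ℤ => jbr k ^ (2 * s) * ‖fourierCoeff (u m) k‖ ^ 2) →
      N2 (mG τ) (fun x => wL τ (3 / 8) x * (Jw τ s x * ‖FT τ (fa u) x‖ₑ)) ≤ ENNReal.ofReal (XdNorm τ s (3 / 8) u) := by
    intro u uM hu
    rw [Xd_eq hτ s (3 / 8) u M (zero_of u uM) hu]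
    apply N2_mono
    intro x
    rw [hWt, mul_assoc]
    gcongr
    exact FT_le τ u x
  have nZ : ENNReal.ofReal (XdNorm τ s (-(3 / 8)) (fun n => projC τ (F n))) = N2 (mG τ) Z :=
    Xd_eq hτ s (-(3 / 8)) (fun n => projC τ (F n)) M FM Fs
  have hwz : (fun x => wL τ (3 / 8) x * z x) = Z := by
    ext x
    simp only [z]
    rw [← mul_assoc]
    have : wL τ (3 / 8) x * wL τ (-(3 / 8)) x = 1 := by
      unfold wL
      have h2 := Lg_pos τ x
      rw [← ENNReal.ofReal_mul (by positivity), ← Real.rpow_add h2]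
      simp
    rw [this, one_mul]
  -- pointwise bound
  have hpt : ∀ x, Jw τ s x * ‖FT τ (fa F) x‖ₑ ≤ cs ^ 2 * cv (mG τ) (cv (mG τ) f g) h x := by
    intro x
    have h1 : ‖FT τ (fa F) x‖ₑ ≤ ‖FT τ ee x‖ₑ := FT_le τ F x
    have h2 := FT_conv hτ (fa w) pr ee M (cutF τ) (pzero_of w wM) prM hee x
    rw [cv_comm (mG τ) (refInv_mG τ) (by fun_prop) (by fun_prop)] at h2
    have h3 := fun y => FT_conv hτ (fa u) (fa v) pr M (cutF τ) (pzero_of u uM) (pzero_of v vM) hpr y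
    have mc : Measurable (cv (mG τ) (fun y => ‖FT τ (fa u) y‖ₑ) (fun y => ‖FT τ (fa v) y‖ₑ)) :=
      cv_meas _ (by fun_prop) (by fun_prop)
    calc Jw τ s x * ‖FT τ (fa F) x‖ₑ
        ≤ Jw τ s x * cv (mG τ) (cv (mG τ) (fun y => ‖FT τ (fa u) y‖ₑ) (fun y => ‖FT τ (fa v) y‖ₑ)) (fun y => ‖FT τ (fa w) y‖ₑ) x := by
          gcongr
          exact (h1.trans h2).trans (cv_mono _ h3 (fun _ => le_rfl) x)
      _ ≤ cs * cv (mG τ) (fun y => Jw τ s y * cv (mG τ) (fun y => ‖FT τ (fa u) y‖ₑ) (fun y => ‖FT τ (fa v) y‖ₑ) y) h x :=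
          Jw_cv hs mc (by fun_prop) x
      _ ≤ cs * cv (mG τ) (fun y => cs * cv (mG τ) f g y) h x := by
          gcongr
          exact cv_mono _ (fun y => Jw_cv hs (by fun_prop) (by fun_prop) y) (fun _ => le_rfl) x
      _ = cs ^ 2 * cv (mG τ) (cv (mG τ) f g) h x := by
          have : cv (mG τ) (fun y => cs * cv (mG τ) f g y) h x = cs * cv (mG τ) (cv (mG τ) f g) h x := by
            conv_lhs => unfold cv
            conv_rhs => rw [cv]
            rw [← lintegral_const_mul]
            · congr 1; ext y
              rw [mul_assoc]; rfl
            · have := cv_meas (mG τ) mf mg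
              simp only [sub_eq_add_neg]; fun_prop
          rw [this]; ring
  have hfin : N2 (mG τ) Z ≠ ⊤ := by rw [← nZ]; exact ENNReal.ofReal_ne_top
  have hkey : N2 (mG τ) Z * N2 (mG τ) Z ≤ ((cs ^ 2 * Cb ^ 2) * (ENNReal.ofReal (XdNorm τ s (3 / 8) u) *
        ENNReal.ofReal (XdNorm τ s (3 / 8) v) * ENNReal.ofReal (XdNorm τ s (3 / 8) w))) * N2 (mG τ) Z := by
    rw [← sq, N2_sq]
    calc ∫⁻ x, Z x ^ 2 ∂(mG τ) ≤ ∫⁻ x, cs ^ 2 * (z x * cv (mG τ) (cv (mG τ) f g) h x) ∂(mG τ) := by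
          apply lintegral_mono
          intro x
          have : Z x ^ 2 = z x * (Jw τ s x * ‖FT τ (fa F) x‖ₑ) := by
            simp only [z, Z]; rw [hWt]; ring
          calc Z x ^ 2 = z x * (Jw τ s x * ‖FT τ (fa F) x‖ₑ) := this
            _ ≤ z x * (cs ^ 2 * cv (mG τ) (cv (mG τ) f g) h x) := mul_le_mul' le_rfl (hpt x)
            _ = _ := by ring
      _ = cs ^ 2 * ∫⁻ x, z x * cv (mG τ) (cv (mG τ) f g) h x ∂(mG τ) := by
          rw [lintegral_const_mul]
          exact mz.mul (cv_meas _ (cv_meas _ mf mg) mh)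
      _ ≤ cs ^ 2 * (N2 (mG τ) (cv (mG τ) f g) * N2 (mG τ) (cv (mG τ) z h)) := by
          gcongr
          exact quad (mG τ) (refInv_mG τ) mz mf mg mh
      _ ≤ cs ^ 2 * ((Cb * (N2 (mG τ) (fun x => wL τ (3 / 8) x * f x) * N2 (mG τ) (fun x => wL τ (3 / 8) x * g x))) *
          (Cb * (N2 (mG τ) (fun x => wL τ (3 / 8) x * z x) * N2 (mG τ) (fun x => wL τ (3 / 8) x * h x)))) := by
          gcongr
          · exact bilinC hτ mf mg (supp u) (supp v)
          · exact bilinC hτ mz mh zsupp (supp w)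
      _ ≤ cs ^ 2 * ((Cb * (ENNReal.ofReal (XdNorm τ s (3 / 8) u) * ENNReal.ofReal (XdNorm τ s (3 / 8) v))) *
          (Cb * (N2 (mG τ) Z * ENNReal.ofReal (XdNorm τ s (3 / 8) w)))) := by
          rw [hwz]
          gcongr
          · exact nrm u uM hu
          · exact nrm v vM hv
          · exact nrm w wM hw
      _ = _ := by ring
  change ENNReal.ofReal (XdNorm τ s (-(3 / 8)) (fun n => projC τ (F n))) ≤ _
  rw [nZ]
  by_cases h0 : N2 (mG τ) Z = 0
  · rw [h0]; exact zero_le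
  · exact (ENNReal.mul_le_mul_iff_left h0 hfin).mp hkey

end fin

/-- The trilinear estimate in discrete Bourgain spaces:
`‖Π_τ(Π_τ u_n Π_τ v_n Π_τ w_n)‖_{X^{s₁,-3/8}_τ} ≲ Π ‖·‖_{X^{s₁,3/8}_τ}` for `s₁ ≥ 0`. -/
theorem discrete_trilinear_estimate (s₁ : ℝ) (hs₁ : 0 ≤ s₁) :
    ∃ C > (0 : ℝ), ∀ τ ∈ Set.Ioc (0 : ℝ) 1, ∀ u v w : ℤ → Torus → ℂ,
      (∀ n, InHs s₁ (u n)) → (∀ n, InHs s₁ (v n)) → (∀ n, InHs s₁ (w n)) →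
      {n : ℤ | u n ≠ 0}.Finite → {n : ℤ | v n ≠ 0}.Finite → {n : ℤ | w n ≠ 0}.Finite →
      XdNorm τ s₁ (-(3 / 8))
          (fun n => projC τ fun y => projC τ (u n) y * projC τ (v n) y * projC τ (w n) y)
        ≤ C * XdNorm τ s₁ (3 / 8) u * XdNorm τ s₁ (3 / 8) v * XdNorm τ s₁ (3 / 8) w := by
  have hCt : ENNReal.ofReal (2 ^ s₁) ^ 2 * Cb ^ 2 ≠ ⊤ :=
    ENNReal.mul_ne_top (ENNReal.pow_ne_top ENNReal.ofReal_ne_top) (ENNReal.pow_ne_top Cb_ne_top)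
  refine ⟨(ENNReal.ofReal (2 ^ s₁) ^ 2 * Cb ^ 2).toReal + 1, by positivity, ?_⟩
  intro τ hτ u v w hu hv hw fu fv fw
  have hτ0 : 0 < τ := hτ.1
  have : Fact (0 < 2 * Real.pi / τ) := ⟨by positivity⟩
  have hm := main_est hs₁ hτ0 u v w (fun m => (hu m).2) (fun m => (hv m).2) (fun m => (hw m).2)
    (fu.toFinset ∪ fv.toFinset ∪ fw.toFinset)
    (fun m hm => by
      by_contra h
      exact hm (by simp only [Finset.mem_union, Set.Finite.mem_toFinset]; exact Or.inl (Or.inl h)))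
    (fun m hm => by
      by_contra h
      exact hm (by simp only [Finset.mem_union, Set.Finite.mem_toFinset]; exact Or.inl (Or.inr h)))
    (fun m hm => by
      by_contra h
      exact hm (by simp only [Finset.mem_union, Set.Finite.mem_toFinset]; exact Or.inr h))
  have nu : 0 ≤ XdNorm τ s₁ (3 / 8) u := Real.sqrt_nonneg _
  have nv : 0 ≤ XdNorm τ s₁ (3 / 8) v := Real.sqrt_nonneg _
  have nw : 0 ≤ XdNorm τ s₁ (3 / 8) w := Real.sqrt_nonneg _
  rw [← ENNReal.ofReal_toReal hCt, ← ENNReal.ofReal_mul nu, ← ENNReal.ofReal_mul (by positivity),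
    ← ENNReal.ofReal_mul (by positivity), ENNReal.ofReal_le_ofReal_iff (by positivity)] at hm
  refine hm.trans ?_
  set K := (ENNReal.ofReal (2 ^ s₁) ^ 2 * Cb ^ 2).toReal
  have : 0 ≤ XdNorm τ s₁ (3 / 8) u * XdNorm τ s₁ (3 / 8) v * XdNorm τ s₁ (3 / 8) w := by positivity
  calc K * (XdNorm τ s₁ (3 / 8) u * XdNorm τ s₁ (3 / 8) v * XdNorm τ s₁ (3 / 8) w)
      ≤ (K + 1) * (XdNorm τ s₁ (3 / 8) u * XdNorm τ s₁ (3 / 8) v * XdNorm τ s₁ (3 / 8) w) := by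
        gcongr; linarith
    _ = _ := by ring
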